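/- arXiv:2109.02835 — 2 statements merged into one kernel-verified Lean document; each statement's English description precedes it below -/
import Mathlib

section
/- For all nonnegative integers a and b: the group W is finite, and in the group algebra ℤ[ℤ^6] one has 𝒜(Z^ϱ) · WGF(L6(a,b);Z) = 𝒜(Z^{aω_{1'} + bω_{6'} + ϱ}). (By the Weyl character formula, this says that the weight generating function of L6(a,b) equals the character char_{E6}(aω_{1'}+bω_{6'}) of the irreducible highest-weight-(aω_{1'}+bω_{6'}) representation of the type E6 simple Lie algebra.) -/
noncomputable section

namespace CL

variable {N : Type} [DecidableEq N] [Fintype N]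

/-- One-step relation generating the partial order on the poset of positions. -/
def step (adj : N → N → Prop) (pos : Finset (N × ℕ)) (x y : N × ℕ) : Prop :=
  x ∈ pos ∧ y ∈ pos ∧ adj x.1 y.1 ∧ y.2 = x.2 + 1

/-- The partial order on positions, generated by `step`. -/
def ple (adj : N → N → Prop) (pos : Finset (N × ℕ)) : N × ℕ → N × ℕ → Prop :=
  Relation.ReflTransGen (step adj pos)

/-- The lattice of `ℕ`-labellings of the positions which are bounded by `k`, order-reversing,
and satisfy a further constraint `extra`. -/
def Elt (adj : N → N → Prop) (pos : Finset (N × ℕ)) (k : ℕ)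
    (extra : ({x : N × ℕ // x ∈ pos} → ℕ) → Prop) : Type :=
  {c : {x : N × ℕ // x ∈ pos} → ℕ //
    (∀ x, c x ≤ k) ∧ (∀ x y, ple adj pos y.1 x.1 → c x ≤ c y) ∧ extra c}

variable {adj : N → N → Prop} {pos : Finset (N × ℕ)} {k : ℕ}
  {extra : ({x : N × ℕ // x ∈ pos} → ℕ) → Prop}

instance : Finite (Elt adj pos k extra) := by
  apply Finite.of_injective
    (fun c : Elt adj pos k extra =>
      fun x => (⟨c.1 x, Nat.lt_succ_of_le (c.2.1 x)⟩ : Fin (k + 1)))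
  intro c d h
  apply Subtype.ext
  funext x
  exact congrArg Fin.val (congrFun h x)

instance : Fintype (Elt adj pos k extra) := Fintype.ofFinite _

instance : DecidableEq (Elt adj pos k extra) := by unfold Elt; infer_instance

/-- Componentwise comparison of labellings. -/
def elLe (r s : Elt adj pos k extra) : Prop := ∀ x, r.1 x ≤ s.1 x

/-- The covering edge of color `i`: exactly one entry, at a position of color `i`,
is increased by one. -/
def edge (i : N) (r s : Elt adj pos k extra) : Prop :=
  ∃ x : {x : N × ℕ // x ∈ pos}, x.1.1 = i ∧ s.1 x = r.1 x + 1 ∧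
    ∀ y, y ≠ x → s.1 y = r.1 y

instance (i : N) (r s : Elt adj pos k extra) : Decidable (edge i r s) := by
  unfold edge; infer_instance

/-- The rank function: the sum of all entries. -/
def rk (t : Elt adj pos k extra) : ℕ := ∑ x ∈ pos.attach, t.1 x

/-- The connected component of `t` in the graph of color-`i` covering edges. -/
def comp (i : N) (t : Elt adj pos k extra) : Set (Elt adj pos k extra) :=
  {s | Relation.ReflTransGen (fun a b => edge i a b ∨ edge i b a) t s}

/-- The integer `m_i(t) = (ρ(t) − min ρ on comp_i(t)) − (max ρ on comp_i(t) − ρ(t))`. -/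
def mwt (i : N) (t : Elt adj pos k extra) : ℤ :=
  ((rk t : ℤ) - ((sInf (rk '' comp i t) : ℕ) : ℤ)) -
    (((sSup (rk '' comp i t) : ℕ) : ℤ) - (rk t : ℤ))

end CL

namespace CL

variable {N : Type} [DecidableEq N] [Fintype N]

/-- The matrix of the simple reflection `S_i : μ ↦ μ − μ_i·(row i of A)`, acting via `mulVec`. -/
def refl (A : N → N → ℤ) (i : N) : Matrix N N ℤ :=
  fun j l => (if j = l then 1 else 0) - (if l = i then A i j else 0)

/-- The Weyl group: the group of integer matrices generated by the simple reflections
(each `S_i` is an involution, so the generated submonoid is a group). -/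
def weyl (A : N → N → ℤ) : Submonoid (Matrix N N ℤ) :=
  Submonoid.closure (Set.range (refl A))

/-- The alternant `𝒜(Z^ν) = Σ_{w∈W} det(w)·Z^{w(ν)}` in the group algebra `ℤ[ℤ^N]`. -/
def alt (A : N → N → ℤ) (ν : N → ℤ) : AddMonoidAlgebra ℤ (N → ℤ) :=
  ∑ᶠ w ∈ (weyl A : Set (Matrix N N ℤ)),
    AddMonoidAlgebra.single (Matrix.mulVec w ν) (Matrix.det w)

end CL

namespace CL

variable {N : Type} [DecidableEq N] [Fintype N]

/-- The weight generating function `WGF(L;Z) = Σ_{t∈L} Z^{wt(t)}` in `ℤ[ℤ^N]`. -/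
def wgf (adj : N → N → Prop) (pos : Finset (N × ℕ)) (k : ℕ)
    (extra : ({x : N × ℕ // x ∈ pos} → ℕ) → Prop) : AddMonoidAlgebra ℤ (N → ℤ) :=
  ∑ t : Elt adj pos k extra, AddMonoidAlgebra.single (fun i => mwt i t) 1

end CL

/-! ### Type `E₆` data -/

/-- The nodes `1', 2', 3', 4', 5', 6'` of the `E₆` Dynkin diagram. -/
inductive N6 : Type
  | m1 | m2 | m3 | m4 | m5 | m6
  deriving DecidableEq

instance : Fintype N6 where
  elems := {.m1, .m2, .m3, .m4, .m5, .m6}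
  complete := by intro x; cases x <;> decide

open N6

/-- Adjacency in the `E₆` Dynkin diagram: edges `1'-2', 2'-3', 3'-4', 3'-5', 5'-6'`. -/
abbrev adj6 : N6 → N6 → Prop := fun a b =>
  (a, b) ∈ ([(m1, m2), (m2, m3), (m3, m4), (m3, m5), (m5, m6)] : List (N6 × N6)) ∨
  (b, a) ∈ ([(m1, m2), (m2, m3), (m3, m4), (m3, m5), (m5, m6)] : List (N6 × N6))

/-- The Cartan matrix of type `E₆`, indexed by the nodes. -/
def A6 : N6 → N6 → ℤ := fun i j => if i = j then 2 else if adj6 i j then -1 else 0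

/-- The 24 (color, rank) positions of the poset `P24 = 𝒫`. -/
def pos24 : Finset (N6 × ℕ) :=
  {(m1, 0), (m2, 1), (m3, 2), (m4, 3), (m5, 3), (m3, 4), (m6, 4), (m2, 5), (m5, 5),
   (m1, 6), (m3, 6), (m2, 7), (m4, 7), (m1, 8), (m3, 8), (m2, 9), (m5, 9), (m3, 10),
   (m6, 10), (m4, 11), (m5, 11), (m3, 12), (m2, 13), (m1, 14)}

/-- The 16 (color, rank) positions of the minuscule poset `P16' = P_{E₆}(ω₁')`. -/
def pos16p : Finset (N6 × ℕ) :=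
  {(m6, 0), (m5, 1), (m3, 2), (m2, 3), (m4, 3), (m1, 4), (m3, 4), (m2, 5), (m5, 5),
   (m3, 6), (m6, 6), (m4, 7), (m5, 7), (m3, 8), (m2, 9), (m1, 10)}

/-- The 16 (color, rank) positions of the minuscule poset `P16'' = P_{E₆}(ω₆')`. -/
def pos16pp : Finset (N6 × ℕ) :=
  {(m1, 0), (m2, 1), (m3, 2), (m4, 3), (m5, 3), (m3, 4), (m6, 4), (m2, 5), (m5, 5),
   (m1, 6), (m3, 6), (m2, 7), (m4, 7), (m3, 8), (m5, 9), (m6, 10)}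

/-- The extra constraints on elements of `L6(a,b)`: `c((1',8)) ≤ a` and `c((1',6)) ≥ a`. -/
def extra6 (a : ℕ) : ({x : N6 × ℕ // x ∈ pos24} → ℕ) → Prop := fun c =>
  c ⟨(m1, 8), by decide⟩ ≤ a ∧ a ≤ c ⟨(m1, 6), by decide⟩

/-- The lattice `L6(a,b) = L_{E₆}(aω₁' + bω₆')`. -/
abbrev L6ab (a b : ℕ) : Type := CL.Elt adj6 pos24 (a + b) (extra6 a)

/-- The lattice `L6'(k) = L_{E₆}(kω₁')`. -/
abbrev L6p (k : ℕ) : Type := CL.Elt adj6 pos16p k (fun _ => True)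

/-- The lattice `L6''(k) = L_{E₆}(kω₆')`. -/
abbrev L6pp (k : ℕ) : Type := CL.Elt adj6 pos16pp k (fun _ => True)

/-! ### Proof: lower and upper bounds for a position -/

namespace E6

/-- The least value allowed at a position, the values at other colors being fixed. -/
def lo (a : ℕ) (f : N6 × ℕ → ℕ) : N6 × ℕ → ℕ
  | (m1, 0) => f (m2, 1)
  | (m2, 1) => f (m3, 2)
  | (m3, 2) => max (f (m4, 3)) (f (m5, 3))
  | (m4, 3) => f (m3, 4)
  | (m5, 3) => max (f (m3, 4)) (f (m6, 4))
  | (m3, 4) => max (f (m2, 5)) (f (m5, 5))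
  | (m6, 4) => f (m5, 5)
  | (m2, 5) => max (f (m1, 6)) (f (m3, 6))
  | (m5, 5) => f (m3, 6)
  | (m1, 6) => max (f (m2, 7)) (a)
  | (m3, 6) => max (f (m2, 7)) (f (m4, 7))
  | (m2, 7) => max (f (m1, 8)) (f (m3, 8))
  | (m4, 7) => f (m3, 8)
  | (m1, 8) => f (m2, 9)
  | (m3, 8) => max (f (m2, 9)) (f (m5, 9))
  | (m2, 9) => f (m3, 10)
  | (m5, 9) => max (f (m3, 10)) (f (m6, 10))
  | (m3, 10) => max (f (m4, 11)) (f (m5, 11))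
  | (m6, 10) => f (m5, 11)
  | (m4, 11) => f (m3, 12)
  | (m5, 11) => f (m3, 12)
  | (m3, 12) => f (m2, 13)
  | (m2, 13) => f (m1, 14)
  | (m1, 14) => 0
  | _ => 0

/-- The largest value allowed at a position, the values at other colors being fixed. -/
def hi (k a : ℕ) (f : N6 × ℕ → ℕ) : N6 × ℕ → ℕ
  | (m1, 0) => k
  | (m2, 1) => f (m1, 0)
  | (m3, 2) => f (m2, 1)
  | (m4, 3) => f (m3, 2)
  | (m5, 3) => f (m3, 2)
  | (m3, 4) => min (f (m4, 3)) (f (m5, 3))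
  | (m6, 4) => f (m5, 3)
  | (m2, 5) => f (m3, 4)
  | (m5, 5) => min (f (m3, 4)) (f (m6, 4))
  | (m1, 6) => f (m2, 5)
  | (m3, 6) => min (f (m2, 5)) (f (m5, 5))
  | (m2, 7) => min (f (m1, 6)) (f (m3, 6))
  | (m4, 7) => f (m3, 6)
  | (m1, 8) => min (f (m2, 7)) (a)
  | (m3, 8) => min (f (m2, 7)) (f (m4, 7))
  | (m2, 9) => min (f (m1, 8)) (f (m3, 8))
  | (m5, 9) => f (m3, 8)
  | (m3, 10) => min (f (m2, 9)) (f (m5, 9))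
  | (m6, 10) => f (m5, 9)
  | (m4, 11) => f (m3, 10)
  | (m5, 11) => min (f (m3, 10)) (f (m6, 10))
  | (m3, 12) => min (f (m4, 11)) (f (m5, 11))
  | (m2, 13) => f (m3, 12)
  | (m1, 14) => f (m2, 13)
  | _ => 0

def Valid (k a : ℕ) (f : N6 × ℕ → ℕ) : Prop :=
  ∀ p ∈ pos24, lo a f p ≤ f p ∧ f p ≤ hi k a f p

/-- The covering relations of `P24`. -/
def edges : List ((N6 × ℕ) × (N6 × ℕ)) :=
  [
    ((m1, 0), (m2, 1)), ((m2, 1), (m3, 2)), ((m3, 2), (m4, 3)), ((m3, 2), (m5, 3)), ((m4, 3),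
    (m3, 4)), ((m5, 3), (m3, 4)), ((m5, 3), (m6, 4)), ((m3, 4), (m2, 5)), ((m3, 4), (m5, 5)),
    ((m6, 4), (m5, 5)), ((m2, 5), (m1, 6)), ((m2, 5), (m3, 6)), ((m5, 5), (m3, 6)), ((m1, 6),
    (m2, 7)), ((m3, 6), (m2, 7)), ((m3, 6), (m4, 7)), ((m2, 7), (m1, 8)), ((m2, 7), (m3, 8)),
    ((m4, 7), (m3, 8)), ((m1, 8), (m2, 9)), ((m3, 8), (m2, 9)), ((m3, 8), (m5, 9)), ((m2, 9),
    (m3, 10)), ((m5, 9), (m3, 10)), ((m5, 9), (m6, 10)), ((m3, 10), (m4, 11)), ((m3, 10), (m5,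
    11)), ((m6, 10), (m5, 11)), ((m4, 11), (m3, 12)), ((m5, 11), (m3, 12)), ((m3, 12), (m2,
    13)), ((m2, 13), (m1, 14))]

lemma step_edges : ∀ p ∈ pos24, ∀ q ∈ pos24, adj6 p.1 q.1 → q.2 = p.2 + 1 → (p, q) ∈ edges := by
  decide +kernel

lemma edges_step : ∀ e ∈ edges, e.1 ∈ pos24 ∧ e.2 ∈ pos24 ∧ adj6 e.1.1 e.2.1 ∧
    e.2.2 = e.1.2 + 1 := by
  decide +kernel

set_option maxHeartbeats 4000000 in
lemma valid_iff (k a : ℕ) (f : N6 × ℕ → ℕ) :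
    Valid k a f ↔ (∀ e ∈ edges, f e.2 ≤ f e.1) ∧ f (m1, 0) ≤ k ∧ f (m1, 8) ≤ a ∧
      a ≤ f (m1, 6) := by
  simp only [Valid, pos24, edges, lo, hi, Finset.forall_mem_insert, Finset.mem_singleton,
    forall_eq, List.forall_mem_cons, max_le_iff, le_min_iff, List.not_mem_nil, Nat.zero_le]
  constructor
  · rintro h
    refine ⟨?_, ?_, ?_, ?_⟩
    · simp only [h, true_and]
      simp
    all_goals simp only [h]
  · rintro ⟨h, h1, h2, h3⟩
    simp only [h, h1, h2, h3, and_true]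

/-- The Cartan matrix as a table. -/
def A6tab : N6 → N6 → ℤ
  | m1, m1 => 2 | m2, m2 => 2 | m3, m3 => 2 | m4, m4 => 2 | m5, m5 => 2 | m6, m6 => 2
  | m1, m2 => -1 | m2, m1 => -1 | m2, m3 => -1 | m3, m2 => -1 | m3, m4 => -1 | m4, m3 => -1
  | m3, m5 => -1 | m5, m3 => -1 | m5, m6 => -1 | m6, m5 => -1
  | _, _ => 0

lemma A6_eq (i j : N6) : A6 i j = A6tab i j := by
  revert i j; decide +kernel

set_option maxHeartbeats 4000000 in
lemma sum24 (g : N6 × ℕ → ℤ) : ∑ p ∈ pos24, g p =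
    g (m1, 0) + (g (m2, 1) + (g (m3, 2) + (g (m4, 3) + (g (m5, 3) + (g (m3, 4) + (g (m6, 4)
      + (g (m2, 5) + (g (m5, 5) + (g (m1, 6) + (g (m3, 6) + (g (m2, 7) + (g (m4, 7) + (g (m1,
      8) + (g (m3, 8) + (g (m2, 9) + (g (m5, 9) + (g (m3, 10) + (g (m6, 10) + (g (m4, 11) + (g
      (m5, 11) + (g (m3, 12) + (g (m2, 13) + (g (m1, 14)))))))))))))))))))))))) := by
  have h : pos24 = ([(m1, 0), (m2, 1), (m3, 2), (m4, 3), (m5, 3), (m3, 4), (m6, 4), (m2, 5), (m5, 5), (m1,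
      6), (m3, 6), (m2, 7), (m4, 7), (m1, 8), (m3, 8), (m2, 9), (m5, 9), (m3, 10), (m6, 10),
      (m4, 11), (m5, 11), (m3, 12), (m2, 13), (m1, 14)] : List (N6 × ℕ)).toFinset := by decide +kernel
  rw [h, List.sum_toFinset g (by decide +kernel)]
  simp

/-- The positions of a given color. -/
def col : N6 → List (N6 × ℕ)
  | m1 => [(m1, 0), (m1, 6), (m1, 8), (m1, 14)]
  | m2 => [(m2, 1), (m2, 5), (m2, 7), (m2, 9), (m2, 13)]
  | m3 => [(m3, 2), (m3, 4), (m3, 6), (m3, 8), (m3, 10), (m3, 12)]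
  | m4 => [(m4, 3), (m4, 7), (m4, 11)]
  | m5 => [(m5, 3), (m5, 5), (m5, 9), (m5, 11)]
  | m6 => [(m6, 4), (m6, 10)]

lemma sum_col (i : N6) (g : N6 × ℕ → ℤ) : ∑ p ∈ pos24 with p.1 = i, g p =
    ((col i).map g).sum := by
  have h : ∀ i, (pos24.filter fun p => p.1 = i) = (col i).toFinset := by decide +kernel
  have h' : ∀ i, (col i).Nodup := by decide +kernel
  rw [h, List.sum_toFinset g (h' i)]

lemma forall_col (i : N6) (Q : N6 × ℕ → Prop) : (∀ p ∈ pos24, p.1 = i → Q p) ↔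
    ∀ p ∈ col i, Q p := by
  have h : ∀ i, ∀ p ∈ pos24, p.1 = i → p ∈ col i := by decide +kernel
  have h' : ∀ i, ∀ p ∈ col i, p ∈ pos24 ∧ p.1 = i := by decide +kernel
  exact ⟨fun H p hp => H p (h' i p hp).1 (h' i p hp).2, fun H p hp hi => H p (h i p hp hi)⟩

set_option maxHeartbeats 4000000 in
lemma sum_lo_hi (k a : ℕ) (f : N6 × ℕ → ℕ) (φ : ℕ → ℤ) (h0 : φ 0 = 0) (i : N6) :
    ∑ p ∈ pos24 with p.1 = i, (2 * φ (f p) - φ (lo a f p) - φ (hi k a f p)) =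
      ∑ p ∈ pos24, A6 i p.1 * φ (f p) - (if i = m1 then φ k + φ a else 0) := by
  have mm : ∀ u v, φ (max u v) + φ (min u v) = φ u + φ v := by
    intro u v
    rcases le_total u v with h | h <;> simp [h, add_comm]
  rw [sum_col, sum24]
  simp only [A6_eq]
  cases i <;>
  · simp only [A6tab, col, lo, hi, h0, List.map_cons, List.map_nil, List.sum_cons, List.sum_nil,
      if_true, reduceCtorEq, if_false, zero_mul, zero_add, add_zero]
    linarith [mm (f (m4, 3)) (f (m5, 3)), mm (f (m3, 4)) (f (m6, 4)), mm (f (m2, 5)) (f (m5, 5)),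
      mm (f (m1, 6)) (f (m3, 6)), mm (f (m2, 7)) a, mm (f (m2, 7)) (f (m4, 7)),
      mm (f (m1, 8)) (f (m3, 8)), mm (f (m2, 9)) (f (m5, 9)), mm (f (m3, 10)) (f (m6, 10)),
      mm (f (m4, 11)) (f (m5, 11))]

end E6

/-! ### Weights and the chain structure of a color class -/

namespace E6

/-- The linear weight functional, with the entries transformed by `φ`. -/
def F (φ : ℕ → ℤ) (k a : ℕ) (f : N6 × ℕ → ℕ) (i : N6) : ℤ :=
  ∑ p ∈ pos24, A6 i p.1 * φ (f p) - (if i = m1 then φ k + φ a else 0)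

/-- Truncation from below. -/
def tr (h n : ℕ) : ℤ := ((n - h : ℕ) : ℤ)

/-- Indicator of `h < n`. -/
def ind (h n : ℕ) : ℤ := if h < n then 1 else 0

lemma F_eq (k a : ℕ) (f : N6 × ℕ → ℕ) (φ : ℕ → ℤ) (h0 : φ 0 = 0) (i : N6) :
    F φ k a f i =
      ∑ p ∈ pos24 with p.1 = i, (2 * φ (f p) - φ (lo a f p) - φ (hi k a f p)) :=
  (sum_lo_hi k a f φ h0 i).symm

lemma tr_succ (h n : ℕ) : tr h n = tr (h + 1) n + ind h n := by
  unfold tr ind; split_ifs <;> omega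

lemma F_succ (h k a : ℕ) (f : N6 × ℕ → ℕ) (i : N6) :
    F (tr h) k a f i = F (tr (h + 1)) k a f i + F (ind h) k a f i := by
  unfold F
  simp only [tr_succ h, mul_add, Finset.sum_add_distrib]
  split_ifs <;> ring

lemma chain_list {α : Type} (L C H : α → ℕ) (h : ℕ) : ∀ l : List α,
    (∀ p ∈ l, L p ≤ C p ∧ C p ≤ H p) → l.Pairwise (fun p q => H q ≤ L p) →
    ((∀ p ∈ l, H p ≤ h) →
      (l.map fun p => 2 * ind h (C p) - ind h (L p) - ind h (H p)).sum = 0) ∧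
    -1 ≤ (l.map fun p => 2 * ind h (C p) - ind h (L p) - ind h (H p)).sum ∧
    ((l.map fun p => 2 * ind h (C p) - ind h (L p) - ind h (H p)).sum = -1 →
      ∀ p ∈ l, h < C p → h < L p) ∧
    (∀ p ∈ l, C p ≤ h → h < H p →
      (l.map fun p => 2 * ind h (C p) - ind h (L p) - ind h (H p)).sum = -1) := by
  intro l
  induction l with
  | nil => simp
  | cons p l ih =>
    intro h1 h2
    rw [List.pairwise_cons] at h2
    rw [List.forall_mem_cons] at h1
    obtain ⟨i0, i1, i2, i3⟩ := ih h1.2 h2.2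
    obtain ⟨⟨hl, hc⟩, hr⟩ := h1
    have hp := h2.1
    simp only [List.map_cons, List.sum_cons, List.forall_mem_cons]
    set S := (l.map fun p => 2 * ind h (C p) - ind h (L p) - ind h (H p)).sum
    by_cases hL : h < L p
    · have e1 : ind h (L p) = 1 := if_pos hL
      have e2 : ind h (C p) = 1 := if_pos (by omega)
      have e3 : ind h (H p) = 1 := if_pos (by omega)
      rw [e1, e2, e3]
      refine ⟨fun hx => by omega, by omega, fun hS => ⟨fun _ => hL, i2 (by omega)⟩,
        fun hx => by omega, fun q hq hx hy => ?_⟩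
      have := i3 q hq hx hy
      omega
    · have e1 : ind h (L p) = 0 := if_neg hL
      have hz : ∀ q ∈ l, H q ≤ h := fun q hq => by have := hp q hq; omega
      have hS := i0 hz
      rw [e1, hS]
      have hz2 : ∀ q ∈ l, C q ≤ h := fun q hq => by have := hz q hq; have := hr q hq; omega
      unfold ind
      refine ⟨fun hx => ?_, ?_, fun hx => ⟨?_, fun q hq hq2 => ?_⟩, fun hx => ?_,
        fun q hq hx hy => ?_⟩
      · have := hx.1
        split_ifs <;> omega
      · split_ifs <;> omega
      · split_ifs at hx <;> omega
      · have := hz2 q hq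
        omega
      · split_ifs <;> omega
      · have := hz q hq
        omega

set_option maxHeartbeats 4000000 in
lemma col_chain {k a : ℕ} {f : N6 × ℕ → ℕ} (hv : Valid k a f) (i : N6) :
    (col i).Pairwise (fun p q => hi k a f q ≤ lo a f p) := by
  rw [valid_iff] at hv
  simp only [edges, List.forall_mem_cons, List.not_mem_nil] at hv
  obtain ⟨h, -, h2, h3⟩ := hv
  cases i <;>
  · simp only [col, lo, hi, List.pairwise_cons, List.forall_mem_cons]
    simp only [List.not_mem_nil, false_implies, implies_true, and_true, List.Pairwise.nil]
    and_intros <;> omega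

lemma delta_facts {k a : ℕ} {f : N6 × ℕ → ℕ} (hv : Valid k a f) (h : ℕ) (i : N6) :
    -1 ≤ F (ind h) k a f i ∧
    (F (ind h) k a f i = -1 → ∀ p ∈ pos24, p.1 = i → h < f p → h < lo a f p) ∧
    (∀ p ∈ pos24, p.1 = i → f p ≤ h → h < hi k a f p → F (ind h) k a f i = -1) := by
  rw [F_eq _ _ _ _ (by simp [ind]), sum_col, forall_col, forall_col]
  refine (chain_list (lo a f) f (hi k a f) h (col i) ?_ (col_chain hv i)).2
  rw [← forall_col]
  exact fun p hp _ => hv p hp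

/-! ### Changing the entries of one color -/

set_option maxHeartbeats 4000000 in
lemma lo_hi_congr (k a : ℕ) {f g : N6 × ℕ → ℕ} {i : N6}
    (h : ∀ p ∈ pos24, p.1 ≠ i → g p = f p) :
    ∀ p ∈ pos24, p.1 = i → lo a g p = lo a f p ∧ hi k a g p = hi k a f p := by
  rw [forall_col]
  simp only [pos24, Finset.forall_mem_insert, Finset.mem_singleton, forall_eq] at h
  cases i <;>
  · simp only [ne_eq, not_true_eq_false, reduceCtorEq, not_false_eq_true, false_implies,
      true_implies, true_and, and_true] at h
    simp only [col, lo, hi, List.forall_mem_cons, List.not_mem_nil, h, true_and, false_implies,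
      implies_true]

set_option maxHeartbeats 4000000 in
lemma edge_lo_hi (k a : ℕ) (f : N6 × ℕ → ℕ) :
    ∀ e ∈ edges, f e.2 ≤ lo a f e.1 ∧ hi k a f e.2 ≤ f e.1 := by
  simp only [edges, lo, hi, List.forall_mem_cons, List.not_mem_nil, le_max_iff, min_le_iff,
    le_refl, true_or, or_true, and_true, false_implies, implies_true]

set_option maxHeartbeats 4000000 in
lemma box_valid {k a : ℕ} {f g : N6 × ℕ → ℕ} (i : N6) (hv : Valid k a f)
    (h : ∀ p ∈ pos24, p.1 ≠ i → g p = f p)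
    (h' : ∀ p ∈ pos24, p.1 = i → lo a f p ≤ g p ∧ g p ≤ hi k a f p) : Valid k a g := by
  have hb : ∀ p ∈ pos24, lo a f p ≤ g p ∧ g p ≤ hi k a f p := by
    intro p hp
    by_cases hi : p.1 = i
    · exact h' p hp hi
    · rw [h p hp hi]; exact hv p hp
  have hv2 := hv
  rw [valid_iff] at hv2 ⊢
  refine ⟨fun e he => ?_, ?_, ?_, ?_⟩
  · obtain ⟨h1, h2, h3, -⟩ := edges_step e he
    obtain ⟨h4, h5⟩ := edge_lo_hi k a f e he
    by_cases hi1 : e.1.1 = i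
    · have hi2 : e.2.1 ≠ i := by
        rintro rfl
        rw [hi1] at h3
        revert h3
        generalize e.2.1 = x
        revert x
        decide
      rw [h _ h2 hi2]
      exact h4.trans (hb _ h1).1
    · rw [h _ h1 hi1]
      exact (hb _ h2).2.trans h5
  · exact (hb (m1, 0) (by decide)).2
  · exact (hb (m1, 8) (by decide)).2.trans (min_le_right _ _)
  · exact (le_max_right _ _).trans (hb (m1, 6) (by decide)).1

/-! ### Elements of the lattice as total functions -/

/-- The lattice, with general parameters. -/
abbrev L (k a : ℕ) : Type := CL.Elt adj6 pos24 k (extra6 a)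

/-- Extension by zero. -/
def ext {k a : ℕ} (t : L k a) (p : N6 × ℕ) : ℕ := if h : p ∈ pos24 then t.1 ⟨p, h⟩ else 0

lemma ext_coe {k a : ℕ} (t : L k a) (x : {x : N6 × ℕ // x ∈ pos24}) : ext t x.1 = t.1 x := by
  simp [ext, x.2]

lemma ext_inj {k a : ℕ} {t s : L k a} (h : ∀ p ∈ pos24, ext t p = ext s p) : t = s := by
  apply Subtype.ext
  funext x
  rw [← ext_coe, ← ext_coe]
  exact h x.1 x.2

lemma ext_valid {k a : ℕ} (t : L k a) : Valid k a (ext t) := by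
  rw [valid_iff]
  refine ⟨fun e he => ?_, ?_, ?_, ?_⟩
  · obtain ⟨h1, h2, h3, h4⟩ := edges_step e he
    have := t.2.2.1 ⟨e.2, h2⟩ ⟨e.1, h1⟩ (Relation.ReflTransGen.single ⟨h1, h2, h3, h4⟩)
    rw [← ext_coe, ← ext_coe] at this
    exact this
  · have := t.2.1 ⟨(m1, 0), by decide⟩
    rwa [← ext_coe] at this
  · have := t.2.2.2.1
    rwa [← ext_coe] at this
  · have := t.2.2.2.2
    rwa [← ext_coe] at this

set_option maxHeartbeats 4000000 in
lemma valid_le {k a : ℕ} {f : N6 × ℕ → ℕ} (hv : Valid k a f) : ∀ p ∈ pos24, f p ≤ k := by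
  rw [valid_iff] at hv
  simp only [edges, List.forall_mem_cons, List.not_mem_nil] at hv
  simp only [pos24, Finset.forall_mem_insert, Finset.mem_singleton, forall_eq]
  obtain ⟨h, h1, h2, h3⟩ := hv
  refine ⟨?_, ?_, ?_, ?_, ?_, ?_, ?_, ?_, ?_, ?_, ?_, ?_, ?_, ?_, ?_, ?_, ?_, ?_, ?_, ?_, ?_, ?_,
    ?_, ?_⟩ <;> omega

/-- The element with given values. -/
def mk {k a : ℕ} (f : N6 × ℕ → ℕ) (hv : Valid k a f) : L k a :=
  ⟨fun x => f x.1, fun x => valid_le hv x.1 x.2, by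
    intro x y h
    have key : ∀ p q, CL.ple adj6 pos24 p q → f q ≤ f p := by
      intro p q h
      induction h with
      | refl => exact le_refl _
      | tail _ hs ih =>
        obtain ⟨h1, h2, h3, h4⟩ := hs
        exact (((valid_iff k a f).1 hv).1 _ (step_edges _ h1 _ h2 h3 h4)).trans ih
    exact key _ _ h, ((valid_iff k a f).1 hv).2.2.1, ((valid_iff k a f).1 hv).2.2.2⟩

lemma ext_mk {k a : ℕ} (f : N6 × ℕ → ℕ) (hv : Valid k a f) :
    ∀ p ∈ pos24, ext (mk (k := k) (a := a) f hv) p = f p := by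
  intro p hp
  simp [ext, hp, mk]

lemma rk_eq {k a : ℕ} (t : L k a) : CL.rk t = ∑ p ∈ pos24, ext t p := by
  rw [← Finset.sum_attach]
  exact Finset.sum_congr rfl fun x _ => (ext_coe t x).symm

end E6

/-! ### The weight of an element -/

namespace E6

lemma edge_agree {k a : ℕ} {i : N6} {r s : L k a} (h : CL.edge i r s) :
    ∀ p ∈ pos24, p.1 ≠ i → ext s p = ext r p := by
  obtain ⟨x, hx, -, h⟩ := h
  intro p hp hpi
  have := h ⟨p, hp⟩ (by rintro rfl; exact hpi hx)
  rw [← ext_coe, ← ext_coe] at this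
  exact this

lemma comp_agree {k a : ℕ} {i : N6} {t s : L k a} (h : s ∈ CL.comp i t) :
    ∀ p ∈ pos24, p.1 ≠ i → ext s p = ext t p := by
  have h' : Relation.ReflTransGen (fun a b => CL.edge i a b ∨ CL.edge i b a) t s := h
  clear h
  induction h' with
  | refl => intros; rfl
  | tail _ hs ih =>
    intro p hp hpi
    rw [← ih p hp hpi]
    rcases hs with hs | hs
    · exact edge_agree hs p hp hpi
    · exact (edge_agree hs p hp hpi).symm

lemma reach {k a : ℕ} (i : N6) (s : L k a) : ∀ (n : ℕ) (t : L k a),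
    CL.rk s = CL.rk t + n → (∀ p ∈ pos24, p.1 ≠ i → ext t p = ext s p) →
    (∀ p ∈ pos24, ext t p ≤ ext s p) →
    Relation.ReflTransGen (fun a b => CL.edge i a b ∨ CL.edge i b a) t s := by
  intro n
  induction n with
  | zero =>
    intro t h _ h2
    rw [rk_eq, rk_eq, add_zero] at h
    have := (Finset.sum_eq_sum_iff_of_le h2).1 h.symm
    rw [ext_inj this]
  | succ n ih =>
    intro t h h1 h2
    have hx : ∃ x ∈ pos24, ext t x < ext s x := by
      by_contra hcon
      push Not at hcon
      have := Finset.sum_le_sum hcon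
      rw [rk_eq, rk_eq] at h
      omega
    obtain ⟨x, hx, hlt⟩ := hx
    have hxi : x.1 = i := by
      by_contra hne
      rw [h1 x hx hne] at hlt
      exact lt_irrefl _ hlt
    have hcg := lo_hi_congr k a h1
    have hv : Valid k a (Function.update (ext t) x (ext t x + 1)) := by
      refine box_valid i (ext_valid t) ?_ ?_
      · intro p hp hpi
        rw [Function.update_of_ne]
        rintro rfl
        exact hpi hxi
      · intro p hp hpi
        by_cases hpx : p = x
        · subst hpx
          rw [Function.update_self]
          have h3 := ext_valid t p hp
          have h4 := ext_valid s p hp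
          rw [← (hcg p hp hpi).2] at h4
          omega
        · rw [Function.update_of_ne hpx]
          exact ext_valid t p hp
    have he := ext_mk _ hv
    set t' : L k a := mk _ hv
    have hr : CL.rk t' = CL.rk t + 1 := by
      rw [rk_eq, rk_eq, Finset.sum_congr rfl he, ← Finset.add_sum_erase _ _ hx,
        ← Finset.add_sum_erase _ (ext t) hx, Function.update_self]
      rw [Finset.sum_congr rfl (g := ext t)]
      · ring
      · intro p hp
        rw [Function.update_of_ne (Finset.ne_of_mem_erase hp)]
    refine Relation.ReflTransGen.head (b := t') (Or.inl ⟨⟨x, hx⟩, hxi, ?_, ?_⟩)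
      (ih t' (by omega) ?_ ?_)
    · rw [← ext_coe, ← ext_coe, he x hx, Function.update_self]
    · rintro y hy
      rw [← ext_coe, ← ext_coe, he y.1 y.2, Function.update_of_ne]
      intro hc
      exact hy (Subtype.ext hc)
    · intro p hp hpi
      rw [he p hp, Function.update_of_ne, h1 p hp hpi]
      rintro rfl
      exact hpi hxi
    · intro p hp
      rw [he p hp]
      by_cases hpx : p = x
      · subst hpx
        rw [Function.update_self]
        exact hlt
      · rw [Function.update_of_ne hpx]
        exact h2 p hp

lemma reach' {k a : ℕ} (i : N6) (s t : L k a)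
    (h1 : ∀ p ∈ pos24, p.1 ≠ i → ext t p = ext s p)
    (h2 : ∀ p ∈ pos24, ext t p ≤ ext s p) : s ∈ CL.comp i t ∧ t ∈ CL.comp i s := by
  have hle : CL.rk t ≤ CL.rk s := by
    rw [rk_eq, rk_eq]
    exact Finset.sum_le_sum h2
  have := reach i s (CL.rk s - CL.rk t) t (by omega) h1 h2
  refine ⟨this, ?_⟩
  have h' : Relation.ReflTransGen (fun x y : L k a => CL.edge i x y ∨ CL.edge i y x) t s := this
  rw [← Relation.reflTransGen_swap] at h'
  exact Relation.ReflTransGen.mono (fun _ _ h => h.symm) _ _ h'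

lemma mwt_eq {k a : ℕ} (i : N6) (t : L k a) : CL.mwt i t = F (tr 0) k a (ext t) i := by
  have hv := ext_valid t
  have hv1 : Valid k a (fun p => if p.1 = i then lo a (ext t) p else ext t p) := by
    refine box_valid i hv (fun p hp hpi => if_neg hpi) (fun p hp hpi => ?_)
    rw [if_pos hpi]
    exact ⟨le_refl _, (hv p hp).1.trans (hv p hp).2⟩
  have hv2 : Valid k a (fun p => if p.1 = i then hi k a (ext t) p else ext t p) := by
    refine box_valid i hv (fun p hp hpi => if_neg hpi) (fun p hp hpi => ?_)
    rw [if_pos hpi]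
    exact ⟨(hv p hp).1.trans (hv p hp).2, le_refl _⟩
  have he1 := ext_mk _ hv1
  have he2 := ext_mk _ hv2
  set s1 : L k a := mk _ hv1
  set s2 : L k a := mk _ hv2
  have hb : ∀ s ∈ CL.comp i t, (∀ p ∈ pos24, ext s1 p ≤ ext s p) ∧
      (∀ p ∈ pos24, ext s p ≤ ext s2 p) := by
    intro s hs
    have ha := comp_agree hs
    have hc := lo_hi_congr k a ha
    refine ⟨fun p hp => ?_, fun p hp => ?_⟩
    · rw [he1 p hp]
      split_ifs with hpi
      · rw [← (hc p hp hpi).1]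
        exact (ext_valid s p hp).1
      · exact (ha p hp hpi).ge
    · rw [he2 p hp]
      split_ifs with hpi
      · rw [← (hc p hp hpi).2]
        exact (ext_valid s p hp).2
      · exact (ha p hp hpi).le
  have ht : t ∈ CL.comp i t := Relation.ReflTransGen.refl
  have m1' : s1 ∈ CL.comp i t := by
    refine (reach' i t s1 (fun p hp hpi => ?_) (hb t ht).1).2
    rw [he1 p hp, if_neg hpi]
  have m2' : s2 ∈ CL.comp i t := by
    refine (reach' i s2 t (fun p hp hpi => ?_) (hb t ht).2).1
    rw [he2 p hp, if_neg hpi]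
  have c1 : sInf (CL.rk '' CL.comp i t) = CL.rk s1 := by
    refine IsLeast.csInf_eq ⟨⟨s1, m1', rfl⟩, ?_⟩
    rintro _ ⟨s, hs, rfl⟩
    rw [rk_eq, rk_eq]
    exact Finset.sum_le_sum (hb s hs).1
  have c2 : sSup (CL.rk '' CL.comp i t) = CL.rk s2 := by
    refine IsGreatest.csSup_eq ⟨⟨s2, m2', rfl⟩, ?_⟩
    rintro _ ⟨s, hs, rfl⟩
    rw [rk_eq, rk_eq]
    exact Finset.sum_le_sum (hb s hs).2
  rw [CL.mwt, c1, c2, F_eq _ _ _ _ (by simp [tr]), Finset.sum_filter, rk_eq, rk_eq, rk_eq]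
  push_cast
  rw [← Finset.sum_sub_distrib, ← Finset.sum_sub_distrib, ← Finset.sum_sub_distrib]
  refine Finset.sum_congr rfl fun p hp => ?_
  rw [he1 p hp, he2 p hp]
  simp only [tr]
  split_ifs
  · simp
    ring
  · simp

/-! ### The partial reflections -/

/-- Reflect the entries of color `i` which are at most `h`. -/
def tauf (k a : ℕ) (i : N6) (h : ℕ) (f : N6 × ℕ → ℕ) (p : N6 × ℕ) : ℕ :=
  if p.1 = i ∧ f p ≤ h then lo a f p + min (hi k a f p) h - f p else f p

lemma tauf_valid {k a : ℕ} (i : N6) (h : ℕ) {f : N6 × ℕ → ℕ} (hv : Valid k a f) :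
    Valid k a (tauf k a i h f) := by
  refine box_valid i hv (fun p hp hpi => ?_) (fun p hp hpi => ?_)
  · simp [tauf, hpi]
  · have := hv p hp
    unfold tauf
    split_ifs <;> omega

/-- The partial reflection on lattice elements. -/
def tau {k a : ℕ} (i : N6) (h : ℕ) (t : L k a) : L k a :=
  mk (tauf k a i h (ext t)) (tauf_valid i h (ext_valid t))

lemma ext_tau {k a : ℕ} (i : N6) (h : ℕ) (t : L k a) :
    ∀ p ∈ pos24, ext (tau i h t) p = tauf k a i h (ext t) p :=
  ext_mk _ _

lemma tau_agree {k a : ℕ} (i : N6) (h : ℕ) (t : L k a) :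
    ∀ p ∈ pos24, p.1 ≠ i → ext (tau i h t) p = ext t p := by
  intro p hp hpi
  rw [ext_tau i h t p hp]
  simp [tauf, hpi]

lemma tau_tau {k a : ℕ} (i : N6) (h : ℕ) (t : L k a) : tau i h (tau i h t) = t := by
  apply ext_inj
  intro p hp
  rw [ext_tau i h _ p hp]
  by_cases hpi : p.1 = i
  · have hc := lo_hi_congr k a (tau_agree i h t) p hp hpi
    rw [tauf, hc.1, hc.2, ext_tau i h t p hp]
    have := ext_valid t p hp
    unfold tauf
    simp only [hpi, true_and]
    split_ifs <;> omega
  · simp only [tauf, hpi, false_and, if_false]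
    exact tau_agree i h t p hp hpi

lemma tr_tau {k a : ℕ} (i : N6) (h : ℕ) (t : L k a) (h' : ℕ) (hh : h ≤ h') :
    ∀ p ∈ pos24, tr h' (ext (tau i h t) p) = tr h' (ext t p) := by
  intro p hp
  rw [ext_tau i h t p hp]
  have := ext_valid t p hp
  unfold tauf tr
  split_ifs <;> omega

lemma F_tau {k a : ℕ} (i : N6) (h : ℕ) (t : L k a) (h' : ℕ) (hh : h ≤ h') (j : N6) :
    F (tr h') k a (ext (tau i h t)) j = F (tr h') k a (ext t) j := by
  unfold F
  congr 1
  exact Finset.sum_congr rfl fun p hp => by rw [tr_tau i h t h' hh p hp]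

lemma A6_symm (i j : N6) : A6 i j = A6 j i := by
  revert i j; decide +kernel

lemma wt_tau {k a : ℕ} (i : N6) (h : ℕ) (t : L k a)
    (H : ∀ p ∈ pos24, p.1 = i → h < ext t p → h < lo a (ext t) p) (j : N6) :
    F (tr 0) k a (ext (tau i h t)) j = F (tr 0) k a (ext t) j -
      A6 i j * (F (tr 0) k a (ext t) i - F (tr h) k a (ext t) i) := by
  have hD : ∑ p ∈ pos24 with p.1 = i, (tr 0 (ext (tau i h t) p) - tr 0 (ext t p)) =
      F (tr h) k a (ext t) i - F (tr 0) k a (ext t) i := by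
    rw [F_eq _ _ _ _ (by simp [tr]), F_eq _ _ _ _ (by simp [tr]), ← Finset.sum_sub_distrib]
    refine Finset.sum_congr rfl fun p hp => ?_
    rw [Finset.mem_filter] at hp
    have h1 := H p hp.1 hp.2
    have h2 := ext_valid t p hp.1
    rw [ext_tau i h t p hp.1]
    unfold tauf tr
    simp only [hp.2, true_and]
    split_ifs <;> omega
  have hA : A6 i j = A6 j i := A6_symm i j
  have hE : ∑ p ∈ pos24, A6 j p.1 * tr 0 (ext (tau i h t) p) -
      ∑ p ∈ pos24, A6 j p.1 * tr 0 (ext t p) = A6 j i *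
      ∑ p ∈ pos24 with p.1 = i, (tr 0 (ext (tau i h t) p) - tr 0 (ext t p)) := by
    rw [← Finset.sum_sub_distrib, Finset.sum_filter, Finset.mul_sum]
    refine Finset.sum_congr rfl fun p hp => ?_
    split_ifs with hpi
    · rw [hpi]; ring
    · rw [tau_agree i h t p hp hpi]; ring
  rw [hD] at hE
  rw [hA]
  have e1 : F (tr 0) k a (ext (tau i h t)) j - F (tr 0) k a (ext t) j =
    A6 j i * (F (tr h) k a (ext t) i - F (tr 0) k a (ext t) i) := by
    rw [← hE]; unfold F; ring
  linarith

lemma F_top {k a : ℕ} (hak : a ≤ k) (t : L k a) (h : ℕ) (hh : k ≤ h) (i : N6) :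
    F (tr h) k a (ext t) i = 0 := by
  have h1 : ∀ n, n ≤ k → tr h n = 0 := by intro n hn; unfold tr; omega
  unfold F
  rw [h1 k le_rfl, h1 a hak, Finset.sum_eq_zero]
  · simp
  · intro p hp
    rw [h1 _ (valid_le (ext_valid t) p hp), mul_zero]

/-! ### The maximal element -/

/-- The positions above position (1, 8). -/
def upper : List (N6 × ℕ) :=
  [(m1, 8), (m2, 9), (m3, 10), (m4, 11), (m5, 11), (m3, 12), (m2, 13), (m1, 14)]

def fmax (k a : ℕ) (p : N6 × ℕ) : ℕ := if p ∈ upper then a else k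

lemma fmax_valid {k a : ℕ} (hak : a ≤ k) : Valid k a (fmax k a) := by
  rw [valid_iff]
  simp [edges, fmax, upper, hak]

set_option maxHeartbeats 4000000 in
lemma F_fmax (φ : ℕ → ℤ) (k a : ℕ) (i : N6) : F φ k a (fmax k a) i =
    (if i = m1 then φ a else 0) + (if i = m6 then φ k - φ a else 0) := by
  unfold F
  rw [sum24]
  simp only [A6_eq]
  cases i <;> simp [A6tab, fmax, upper] <;> ring

set_option maxHeartbeats 4000000 in
lemma le_fmax {k a : ℕ} {f : N6 × ℕ → ℕ} (hv : Valid k a f) :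
    ∀ p ∈ pos24, f p ≤ fmax k a p := by
  intro p hp
  unfold fmax
  split_ifs with h
  · rw [valid_iff] at hv
    simp only [edges, List.forall_mem_cons, List.not_mem_nil] at hv
    obtain ⟨h, h1, h2, h3⟩ := hv
    revert p
    suffices ∀ p ∈ upper, f p ≤ a from fun p _ hp => this p hp
    simp only [upper, List.forall_mem_cons, List.not_mem_nil, false_implies, implies_true,
      and_true]
    and_intros <;> omega
  · exact valid_le hv p hp

set_option maxHeartbeats 4000000 in
lemma hi_gt {k a : ℕ} (hak : a ≤ k) (f : N6 × ℕ → ℕ) (h : ℕ) : ∀ p ∈ pos24,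
    (∀ e ∈ edges, e.2 = p → h < f e.1) → h < fmax k a p → h < hi k a f p := by
  have key : ∀ p ∈ pos24, (∀ q, (q, p) ∈ edges → h < f q) → h < fmax k a p →
      h < hi k a f p := by
    simp only [pos24, Finset.forall_mem_insert, Finset.mem_singleton, forall_eq]
    and_intros <;> intro H hlt <;> simp only [hi, lt_min_iff] <;> and_intros <;>
      first
      | exact H _ (by decide +kernel)
      | simpa [fmax, upper] using hlt
  exact fun p hp H hlt => key p hp (fun q hq => H _ hq rfl) hlt

lemma fmax_anti {k a : ℕ} (hak : a ≤ k) : ∀ e ∈ edges, fmax k a e.2 ≤ fmax k a e.1 :=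
  ((valid_iff _ _ _).1 (fmax_valid hak)).1

lemma good_eq {k a : ℕ} (hak : a ≤ k) (f : N6 × ℕ → ℕ) (hv : Valid k a f)
    (hg : ∀ h i, F (tr h) k a f i ≠ -1) : ∀ p ∈ pos24, f p = fmax k a p := by
  have key : ∀ n h, h + n = k → ∀ j, h ≤ j → ∀ p ∈ pos24, j < fmax k a p → j < f p := by
    intro n
    induction n with
    | zero =>
      intro h hh j hj p hp hlt
      have := valid_le (fmax_valid hak) p hp
      omega
    | succ n ih =>
      intro h hh
      have ih' := ih (h + 1) (by omega)
      suffices ∀ (r : ℕ) (p), p.2 = r → p ∈ pos24 → h < fmax k a p → h < f p by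
        intro j hj p hp
        rcases Nat.eq_or_lt_of_le hj with rfl | hj
        · exact this _ p rfl hp
        · exact ih' j hj p hp
      intro r
      induction r using Nat.strong_induction_on with
      | _ r ihr =>
        intro p hpr hp hlt
        by_contra hcon
        have hhi : h < hi k a f p := by
          refine hi_gt hak f h p hp ?_ hlt
          rintro e he rfl
          obtain ⟨h1, h2, h3, h4⟩ := edges_step e he
          exact ihr e.1.2 (by omega) e.1 rfl h1 (hlt.trans_le (fmax_anti hak e he))
        have hd := (delta_facts hv h p.1).2.2 p hp rfl (by omega) hhi
        have hs := F_succ h k a f p.1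
        refine hg h p.1 ?_
        rw [hs, hd]
        suffices F (tr (h + 1)) k a f p.1 = 0 by rw [this]; rfl
        have e1 : F (tr (h + 1)) k a f p.1 = F (tr (h + 1)) k a (fmax k a) p.1 := by
          unfold F
          congr 1
          refine Finset.sum_congr rfl fun q hq => ?_
          congr 1
          have h1 := le_fmax hv q hq
          have h2 := ih' (f q)
          unfold tr
          by_cases hq' : h + 1 ≤ f q
          · have := h2 hq' q hq
            omega
          · have := ih' (h + 1) le_rfl q hq
            omega
        rw [e1, F_fmax]
        have ha : tr (h + 1) a = 0 := by
          unfold tr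
          by_contra hne
          have := ih' (h + 1) le_rfl p hp (by unfold fmax; split_ifs <;> omega)
          omega
        rw [ha]
        split_ifs with c1 c2 c2
        · rw [c1] at c2; cases c2
        · simp
        · have hu : ∀ p ∈ upper, p.1 ≠ m6 := by decide
          have hu' : p ∉ upper := fun hx => hu p hx c2
          have := ih' (h + 1) le_rfl p hp
          unfold fmax at this
          rw [if_neg hu'] at this
          unfold tr
          omega
        · simp
  intro p hp
  have h1 := le_fmax hv p hp
  have h2 := key k 0 (by omega) (f p) (by omega) p hp
  omega

end E6

/-! ### The Weyl group -/

namespace E6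

open CL

/-- A vector from its coordinates. -/
def vec (x : ℤ × ℤ × ℤ × ℤ × ℤ × ℤ) : N6 → ℤ
  | m1 => x.1
  | m2 => x.2.1
  | m3 => x.2.2.1
  | m4 => x.2.2.2.1
  | m5 => x.2.2.2.2.1
  | m6 => x.2.2.2.2.2

/-- The orbit of the first fundamental weight. -/
def orb : List (ℤ × ℤ × ℤ × ℤ × ℤ × ℤ) :=
  [
    (1, 0, 0, 0, 0, 0), (-1, 1, 0, 0, 0, 0), (0, -1, 1, 0, 0, 0), (0, 0, -1, 1, 1, 0), (0, 0,
    0, -1, 1, 0), (0, 0, 0, 1, -1, 1), (0, 0, 1, -1, -1, 1), (0, 0, 0, 1, 0, -1), (0, 1, -1,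
    0, 0, 1), (0, 0, 1, -1, 0, -1), (1, -1, 0, 0, 0, 1), (0, 1, -1, 0, 1, -1), (-1, 0, 0, 0,
    0, 1), (1, -1, 0, 0, 1, -1), (0, 1, 0, 0, -1, 0), (-1, 0, 0, 0, 1, -1), (1, -1, 1, 0, -1,
    0), (-1, 0, 1, 0, -1, 0), (1, 0, -1, 1, 0, 0), (-1, 1, -1, 1, 0, 0), (1, 0, 0, -1, 0, 0),
    (0, -1, 0, 1, 0, 0), (-1, 1, 0, -1, 0, 0), (0, -1, 1, -1, 0, 0), (0, 0, -1, 0, 1, 0), (0,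
    0, 0, 0, -1, 1), (0, 0, 0, 0, 0, -1)]

lemma refl_mulVec (i : N6) (μ : N6 → ℤ) (j : N6) :
    (refl A6 i).mulVec μ j = μ j - A6 i j * μ i := by
  simp [Matrix.mulVec, dotProduct, CL.refl, sub_mul, Finset.sum_sub_distrib]

/-- The reflections in coordinates. -/
def srefl (i : N6) (x : ℤ × ℤ × ℤ × ℤ × ℤ × ℤ) : ℤ × ℤ × ℤ × ℤ × ℤ × ℤ :=
  let g := fun j => vec x j - A6 i j * vec x i
  (g m1, g m2, g m3, g m4, g m5, g m6)

lemma srefl_orb : ∀ i, ∀ x ∈ orb, srefl i x ∈ orb := by decide +kernel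

lemma weyl_orb (w : Matrix N6 N6 ℤ) (hw : w ∈ weyl A6) :
    ∀ x ∈ orb, ∃ y ∈ orb, w.mulVec (vec x) = vec y := by
  induction hw using Submonoid.closure_induction with
  | mem w hw =>
    obtain ⟨i, rfl⟩ := hw
    intro x hx
    refine ⟨srefl i x, srefl_orb i x hx, ?_⟩
    funext j
    rw [refl_mulVec]
    cases j <;> rfl
  | one => exact fun x hx => ⟨x, hx, by simp⟩
  | mul w w' _ _ h h' =>
    intro x hx
    obtain ⟨y, hy, e⟩ := h' x hx
    obtain ⟨z, hz, e'⟩ := h y hy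
    exact ⟨z, hz, by rw [← Matrix.mulVec_mulVec, e, e']⟩

lemma mulVec_orb_inj (w w' : Matrix N6 N6 ℤ)
    (h : ∀ x ∈ orb, w.mulVec (vec x) = w'.mulVec (vec x)) : w = w' := by
  have key : ∀ x ∈ orb, ∀ j, (w - w').mulVec (vec x) j = 0 := by
    intro x hx j
    rw [Matrix.sub_mulVec, h x hx]
    simp
  have hsum : ∀ g : N6 → ℤ, ∑ l, g l = g m1 + (g m2 + (g m3 + (g m4 + (g m5 + g m6)))) := by
    intro g
    have : (Finset.univ : Finset N6) = {m1, m2, m3, m4, m5, m6} := rfl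
    rw [this]
    simp
  ext j l
  have e := fun x hx => key x hx j
  simp only [Matrix.mulVec, dotProduct, hsum, vec] at e
  have e1 := e (1, 0, 0, 0, 0, 0) (by decide +kernel)
  have e2 := e (-1, 1, 0, 0, 0, 0) (by decide +kernel)
  have e3 := e (0, -1, 1, 0, 0, 0) (by decide +kernel)
  have e4 := e (0, 0, 0, -1, 1, 0) (by decide +kernel)
  have e5 := e (0, 0, 0, 1, -1, 1) (by decide +kernel)
  have e6 := e (0, 0, 0, 1, 0, -1) (by decide +kernel)
  simp only [Matrix.sub_apply] at e1 e2 e3 e4 e5 e6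
  cases l <;> linarith

lemma weyl_finite : (weyl A6 : Set (Matrix N6 N6 ℤ)).Finite := by
  let Φ : Matrix N6 N6 ℤ → ({x // x ∈ orb} → N6 → ℤ) := fun w x => w.mulVec (vec x.1)
  have hΦ : Function.Injective Φ := by
    intro w w' h
    exact mulVec_orb_inj w w' fun x hx => congrFun h ⟨x, hx⟩
  have hfin : (Set.pi Set.univ fun _ : {x // x ∈ orb} => vec '' {y | y ∈ orb}).Finite :=
    Set.Finite.pi fun _ => (List.finite_toSet orb).image vec
  refine (hfin.preimage hΦ.injOn).subset ?_
  intro w hw x _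
  obtain ⟨y, hy, e⟩ := weyl_orb w hw x.1 x.2
  exact ⟨y, hy, e.symm⟩

lemma det_refl (i : N6) : (refl A6 i).det = -1 := by
  have h : refl A6 i = 1 + Matrix.replicateCol Unit (fun j => - A6 i j) *
      Matrix.replicateRow Unit (Pi.single i (1 : ℤ)) := by
    ext j l
    simp [CL.refl, Matrix.mul_apply, Matrix.one_apply, Pi.single_apply, sub_eq_add_neg]
    split_ifs <;> simp
  rw [h, Matrix.det_one_add_replicateCol_mul_replicateRow]
  simp [A6]

lemma refl_mul_self (i : N6) : refl A6 i * refl A6 i = 1 := by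
  revert i
  decide +kernel

lemma refl_mem (i : N6) : refl A6 i ∈ weyl A6 := Submonoid.subset_closure ⟨i, rfl⟩

lemma alt_eq (ν : N6 → ℤ) : alt A6 ν =
    ∑ w ∈ weyl_finite.toFinset, AddMonoidAlgebra.single (Matrix.mulVec w ν) (Matrix.det w) :=
  finsum_mem_eq_finite_toFinset_sum _ weyl_finite

lemma alt_refl (i : N6) (ν : N6 → ℤ) : alt A6 ((refl A6 i).mulVec ν) = - alt A6 ν := by
  rw [alt_eq, alt_eq, ← Finset.sum_neg_distrib]
  refine Finset.sum_bij' (fun w _ => w * refl A6 i) (fun w _ => w * refl A6 i) ?_ ?_ ?_ ?_ ?_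
  · intro w hw
    rw [Set.Finite.mem_toFinset] at hw ⊢
    exact mul_mem hw (refl_mem i)
  · intro w hw
    rw [Set.Finite.mem_toFinset] at hw ⊢
    exact mul_mem hw (refl_mem i)
  · intro w _
    rw [mul_assoc, refl_mul_self, mul_one]
  · intro w _
    rw [mul_assoc, refl_mul_self, mul_one]
  · intro w _
    rw [Matrix.mulVec_mulVec, Matrix.det_mul, det_refl, mul_neg_one, AddMonoidAlgebra.single_neg,
      neg_neg]

lemma self_neg (x : AddMonoidAlgebra ℤ (N6 → ℤ)) (h : x + x = 0) : x = 0 := by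
  have h2 : (2 : ℤ) • x = 0 := by rw [two_smul, h]
  exact (smul_eq_zero.1 h2).resolve_left two_ne_zero

/-! ### The character identity -/

/-- The weight of a lattice element. -/
def wt {k a : ℕ} (t : L k a) : N6 → ℤ := fun i => mwt i t

lemma wt_apply {k a : ℕ} (t : L k a) (i : N6) : wt t i = F (tr 0) k a (ext t) i := mwt_eq i t

lemma weyl_perm {k a : ℕ} (hak : a ≤ k) (w : Matrix N6 N6 ℤ) (hw : w ∈ weyl A6) :
    ∃ σ : Equiv.Perm (L k a), ∀ t, wt (σ t) = w.mulVec (wt t) := by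
  induction hw using Submonoid.closure_induction with
  | mem w hw =>
    obtain ⟨i, rfl⟩ := hw
    refine ⟨⟨tau i k, tau i k, tau_tau i k, tau_tau i k⟩, fun t => ?_⟩
    funext j
    change wt (tau i k t) j = _
    rw [refl_mulVec, wt_apply, wt_apply, wt_apply, wt_tau, F_top hak t k le_rfl, sub_zero]
    intro p hp _ hlt
    have := valid_le (ext_valid t) p hp
    omega
  | one => exact ⟨1, fun t => by simp⟩
  | mul w w' _ _ h h' =>
    obtain ⟨σ, hσ⟩ := h
    obtain ⟨σ', hσ'⟩ := h'
    exact ⟨σ * σ', fun t => by rw [Equiv.Perm.mul_apply, hσ, hσ', Matrix.mulVec_mulVec]⟩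

lemma alt_mul_wgf {k a : ℕ} (hak : a ≤ k) (ν : N6 → ℤ) :
    alt A6 ν * wgf adj6 pos24 k (extra6 a) = ∑ t : L k a, alt A6 (ν + wt t) := by
  simp only [alt_eq]
  rw [Finset.sum_comm, Finset.sum_mul]
  refine Finset.sum_congr rfl fun w hw => ?_
  rw [Set.Finite.mem_toFinset] at hw
  obtain ⟨σ, hσ⟩ := weyl_perm hak w hw
  have h1 : wgf adj6 pos24 k (extra6 a) =
      ∑ t : L k a, AddMonoidAlgebra.single (w.mulVec (wt t)) (1 : ℤ) := by
    simp only [← hσ]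
    exact (Equiv.sum_comp σ fun t => AddMonoidAlgebra.single (wt t) (1 : ℤ)).symm
  rw [h1, Finset.mul_sum]
  refine Finset.sum_congr rfl fun t _ => ?_
  rw [AddMonoidAlgebra.single_mul_single, mul_one, Matrix.mulVec_add]

/-- Elements which are cancelled. -/
def Bad {k a : ℕ} (t : L k a) (h : ℕ) : Prop := ∃ i, F (tr h) k a (ext t) i = -1

open Classical in
/-- The first bad level, from above. -/
def lev {k a : ℕ} (t : L k a) : ℕ := Nat.findGreatest (Bad t) k

/-- The color of cancellation. -/
def clr {k a : ℕ} (t : L k a) : N6 :=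
  @Classical.epsilon N6 ⟨m1⟩ fun i => F (tr (lev t)) k a (ext t) i = -1

/-- The sign-reversing involution. -/
def inv {k a : ℕ} (t : L k a) : L k a := tau (clr t) (lev t) t

lemma bad_le {k a : ℕ} (hak : a ≤ k) (t : L k a) (h : ℕ) (hb : Bad t h) : h ≤ k := by
  by_contra hlt
  obtain ⟨i, hi⟩ := hb
  rw [F_top hak t h (by omega)] at hi
  omega

lemma lev_spec {k a : ℕ} (hak : a ≤ k) (t : L k a) (hb : ∃ h, Bad t h) :
    Bad t (lev t) ∧ ∀ h, lev t < h → ¬ Bad t h := by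
  classical
  obtain ⟨h, hb⟩ := hb
  refine ⟨?_, fun h' hlt hb' => ?_⟩
  · unfold lev
    convert Nat.findGreatest_spec (P := Bad t) (bad_le hak t h hb) hb
  · refine Nat.findGreatest_is_greatest (P := Bad t) (n := k) ?_ (bad_le hak t h' hb') hb'
    unfold lev at hlt
    convert hlt

lemma clr_spec {k a : ℕ} (hak : a ≤ k) (t : L k a) (hb : ∃ h, Bad t h) :
    F (tr (lev t)) k a (ext t) (clr t) = -1 :=
  Classical.epsilon_spec (p := fun i => F (tr (lev t)) k a (ext t) i = -1) (lev_spec hak t hb).1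

lemma bad_inv {k a : ℕ} (t : L k a) (h : ℕ) (hh : lev t ≤ h) : Bad (inv t) h ↔ Bad t h := by
  unfold Bad inv
  simp only [F_tau _ _ t h hh]

lemma lev_inv {k a : ℕ} (hak : a ≤ k) (t : L k a) (hb : ∃ h, Bad t h) : lev (inv t) = lev t := by
  obtain ⟨h1, h2⟩ := lev_spec hak t hb
  have h3 := (bad_inv t _ le_rfl).2 h1
  obtain ⟨h4, h5⟩ := lev_spec hak (inv t) ⟨_, h3⟩
  rcases lt_trichotomy (lev (inv t)) (lev t) with h | h | h
  · exact absurd h3 (h5 _ h)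
  · exact h
  · exact absurd ((bad_inv t _ h.le).1 h4) (h2 _ h)

lemma clr_inv {k a : ℕ} (hak : a ≤ k) (t : L k a) (hb : ∃ h, Bad t h) : clr (inv t) = clr t := by
  unfold clr
  rw [lev_inv hak t hb]
  unfold inv
  simp only [F_tau _ _ t _ le_rfl]

lemma inv_inv {k a : ℕ} (hak : a ≤ k) (t : L k a) (hb : ∃ h, Bad t h) : inv (inv t) = t := by
  rw [inv, clr_inv hak t hb, lev_inv hak t hb, inv, tau_tau]

lemma nonneg_above {k a : ℕ} (hak : a ≤ k) (t : L k a) (l : ℕ) (i : N6)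
    (hl : ∀ h, l < h → ¬ Bad t h) : ∀ n h, h + n = k → l < h → 0 ≤ F (tr h) k a (ext t) i := by
  intro n
  induction n with
  | zero =>
    intro h hh _
    rw [F_top hak t h (by omega)]
  | succ n ih =>
    intro h hh hlt
    have h1 := ih (h + 1) (by omega) (by omega)
    have h2 := F_succ h k a (ext t) i
    have h3 := (delta_facts (ext_valid t) h i).1
    have h4 : F (tr h) k a (ext t) i ≠ -1 := fun hx => hl h hlt ⟨i, hx⟩
    omega

lemma wt_inv {k a : ℕ} (hak : a ≤ k) (t : L k a) (hb : ∃ h, Bad t h) :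
    (fun _ => 1) + wt (inv t) = (refl A6 (clr t)).mulVec ((fun _ => 1) + wt t) := by
  have hl := lev_spec hak t hb
  have hc := clr_spec hak t hb
  have hd : F (ind (lev t)) k a (ext t) (clr t) = -1 := by
    have h1 : 0 ≤ F (tr (lev t + 1)) k a (ext t) (clr t) := by
      by_cases hk : lev t + 1 ≤ k
      · exact nonneg_above hak t (lev t) (clr t) hl.2 (k - (lev t + 1)) _ (by omega) (by omega)
      · rw [F_top hak t _ (by omega)]
    have h2 := F_succ (lev t) k a (ext t) (clr t)
    have h3 := (delta_facts (ext_valid t) (lev t) (clr t)).1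
    omega
  have H := (delta_facts (ext_valid t) (lev t) (clr t)).2.1 hd
  funext j
  rw [refl_mulVec]
  simp only [Pi.add_apply, wt_apply]
  rw [inv, wt_tau _ _ t H j, hc]
  ring

end E6
/-- the Weyl group of `E₆` is finite and
`𝒜(Z^ϱ)·WGF(L6(a,b);Z) = 𝒜(Z^{aω₁'+bω₆'+ϱ})` in `ℤ[ℤ^6]`. -/
theorem statement_7 (a b : ℕ) :
    ((CL.weyl A6 : Set (Matrix N6 N6 ℤ)).Finite) ∧
    CL.alt A6 (fun _ => 1) * CL.wgf adj6 pos24 (a + b) (extra6 a) =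
      CL.alt A6 (fun j =>
        (if j = m1 then (a : ℤ) else 0) + (if j = m6 then (b : ℤ) else 0) + 1) := by
  classical
  refine ⟨E6.weyl_finite, ?_⟩
  have hak : a ≤ a + b := Nat.le_add_right a b
  rw [E6.alt_mul_wgf hak,
    ← Finset.sum_filter_add_sum_filter_not Finset.univ (fun t => ∃ h, E6.Bad t h)]
  have h0 : ∑ t : E6.L (a + b) a with ∃ h, E6.Bad t h,
      CL.alt A6 ((fun _ => 1) + E6.wt t) = 0 := by
    have hs : ∀ t : E6.L (a + b) a, (∃ h, E6.Bad t h) →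
        CL.alt A6 ((fun _ => 1) + E6.wt t) + CL.alt A6 ((fun _ => 1) + E6.wt (E6.inv t)) = 0 := by
      intro t ht
      rw [E6.wt_inv hak t ht, E6.alt_refl, add_neg_cancel]
    refine Finset.sum_involution (fun t _ => E6.inv t) ?_ ?_ ?_ ?_
    · intro t ht
      exact hs t (Finset.mem_filter.1 ht).2
    · intro t ht hne heq
      have h1 := hs t (Finset.mem_filter.1 ht).2
      rw [heq] at h1
      exact hne (E6.self_neg _ h1)
    · intro t ht
      have hb := (Finset.mem_filter.1 ht).2
      rw [Finset.mem_filter]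
      exact ⟨Finset.mem_univ _, E6.lev t,
        (E6.bad_inv t _ le_rfl).2 (E6.lev_spec hak t hb).1⟩
    · intro t ht
      exact E6.inv_inv hak t (Finset.mem_filter.1 ht).2
  rw [h0, zero_add]
  have he := E6.ext_mk (k := a + b) (a := a) _ (E6.fmax_valid hak)
  set T : E6.L (a + b) a := E6.mk _ (E6.fmax_valid hak) with hT
  have hF : ∀ φ i, E6.F φ (a + b) a (E6.ext T) i = E6.F φ (a + b) a (E6.fmax (a + b) a) i := by
    intro φ i
    unfold E6.F
    exact congrArg₂ _ (Finset.sum_congr rfl fun p hp => by rw [he p hp]) rfl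
  have h1 : (Finset.univ.filter fun t : E6.L (a + b) a => ¬ ∃ h, E6.Bad t h) = {T} := by
    ext t
    rw [Finset.mem_filter, Finset.mem_singleton]
    constructor
    · rintro ⟨-, hg⟩
      apply E6.ext_inj
      intro p hp
      rw [he p hp]
      refine E6.good_eq hak _ (E6.ext_valid t) ?_ p hp
      intro h i hx
      exact hg ⟨h, i, hx⟩
    · rintro rfl
      refine ⟨Finset.mem_univ _, ?_⟩
      rintro ⟨h, i, hx⟩
      rw [hF, E6.F_fmax] at hx
      unfold E6.tr at hx
      split_ifs at hx <;> omega
  rw [h1, Finset.sum_singleton]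
  congr 1
  funext j
  rw [Pi.add_apply, E6.wt_apply, hF, E6.F_fmax]
  unfold E6.tr
  simp only [Nat.sub_zero, Nat.cast_add, add_sub_cancel_left]
  ring

end
end

section
/- Fix a nonnegative integer k and t ∈ L7(k). Let C(t) := {c ∈ L7(k) : c(x) = t(x) for every position x ∈ P7 of color 5, i.e., for x ∈ {(5,4),(5,8),(5,12)}}, regarded as a poset with the induced order and with each covering relation colored as in L7(k) (all such colors lie in {1,2,3,4,5',6'}). Let S(t) be the skew-tabular lattice with parameters n = 6, m = 9 and boundary functions β0, β1 given by β0(−8) = 0; β0(j) = t((5,12)) for −7 ≤ j ≤ −4; β0(j) = t((5,4)) for −3 ≤ j ≤ 0; β1(−1) = β1(0) = β1(1) = t((5,8)); β1(j) = k for 2 ≤ j ≤ 7. Then there is a bijection from C(t) onto S(t) that is an isomorphism of posets and carries covering relations of colors 1,2,3,4,5',6' to covering relations of colors 1,2,3,4,5,6, respectively. -/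
noncomputable section

/-! ### Type `E₇` data -/

/-- The nodes `1, 2, 3, 4, 5, 5', 6'` of the `E₇` Dynkin diagram. -/
inductive N7 : Type
  | n1 | n2 | n3 | n4 | n5 | n5p | n6p
  deriving DecidableEq

instance : Fintype N7 where
  elems := {N7.n1, N7.n2, N7.n3, N7.n4, N7.n5, N7.n5p, N7.n6p}
  complete := by intro x; cases x <;> decide

open N7

/-- Adjacency in the `E₇` Dynkin diagram: edges `1-2, 2-3, 3-4, 4-5, 4-5', 5'-6'`. -/
abbrev adj7 : N7 → N7 → Prop := fun a b =>
  (a, b) ∈ ([(n1, n2), (n2, n3), (n3, n4), (n4, n5), (n4, n5p), (n5p, n6p)] : List (N7 × N7)) ∨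
  (b, a) ∈ ([(n1, n2), (n2, n3), (n3, n4), (n4, n5), (n4, n5p), (n5p, n6p)] : List (N7 × N7))

/-- The 27 (color, rank) positions of the minuscule poset `P₇ = P_{E₇}(ω₁)`. -/
def pos7 : Finset (N7 × ℕ) :=
  {(n1, 0), (n2, 1), (n3, 2), (n4, 3), (n5, 4), (n5p, 4), (n4, 5), (n6p, 5), (n3, 6),
   (n5p, 6), (n2, 7), (n4, 7), (n1, 8), (n3, 8), (n5, 8), (n2, 9), (n4, 9), (n3, 10),
   (n5p, 10), (n4, 11), (n6p, 11), (n5, 12), (n5p, 12), (n4, 13), (n3, 14), (n2, 15), (n1, 16)}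

/-- The lattice `L7(k) = L_{E₇}(kω₁)` of order-reversing labellings of `P₇` by `{0,…,k}`. -/
abbrev L7 (k : ℕ) : Type := CL.Elt adj7 pos7 k (fun _ => True)

/-- The Cartan matrix of type `E₇`, indexed by the nodes. -/
def A7 : N7 → N7 → ℤ := fun i j => if i = j then 2 else if adj7 i j then -1 else 0

/-! ### Skew-tabular lattices -/

namespace ST

/-- Index positions of a GT parallelogram: rows `0,…,n+1`, row `i` having
columns `C_i = {i, i−1, …, i−(m−1)}`. -/
def Idx (n m : ℕ) : Type :=
  {p : ℕ × ℤ // p.1 ≤ n + 1 ∧ (p.1 : ℤ) - ((m : ℤ) - 1) ≤ p.2 ∧ p.2 ≤ (p.1 : ℤ)}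

/-- The skew-tabular lattice with boundary rows `β0` (row `0`) and `β1` (row `n+1`):
arrays of nonnegative integers weakly increasing along NW-to-SE and NE-to-SW diagonals. -/
def Elt (n m : ℕ) (β0 β1 : ℤ → ℕ) : Type :=
  {g : Idx n m → ℕ //
    (∀ p : Idx n m, p.1.1 = 0 → g p = β0 p.1.2) ∧
    (∀ p : Idx n m, p.1.1 = n + 1 → g p = β1 p.1.2) ∧
    (∀ p q : Idx n m, q.1.1 = p.1.1 + 1 → q.1.2 = p.1.2 → g q ≤ g p) ∧
    (∀ p q : Idx n m, q.1.1 = p.1.1 + 1 → q.1.2 = p.1.2 + 1 → g p ≤ g q)}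

variable {n m : ℕ} {β0 β1 : ℤ → ℕ}

/-- Componentwise comparison of arrays. -/
def le (r s : Elt n m β0 β1) : Prop := ∀ p, r.1 p ≤ s.1 p

/-- The covering edge of color `i`: exactly one entry, in row `i`, is increased by one. -/
def edge (i : ℕ) (r s : Elt n m β0 β1) : Prop :=
  ∃ p : Idx n m, p.1.1 = i ∧ s.1 p = r.1 p + 1 ∧ ∀ q, q ≠ p → s.1 q = r.1 q

/-- The entry of an array at `(i, j)` (junk value `0` outside the index set). -/
def ent (g : Elt n m β0 β1) (i : ℕ) (j : ℤ) : ℕ :=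
  if h : i ≤ n + 1 ∧ (i : ℤ) - ((m : ℤ) - 1) ≤ j ∧ j ≤ (i : ℤ) then g.1 ⟨(i, j), h⟩ else 0

/-- The rank function: the sum of all entries in rows `1,…,n`. -/
def rk (g : Elt n m β0 β1) : ℕ :=
  ∑ i ∈ Finset.range (n + 2), ∑ u ∈ Finset.range m,
    if 1 ≤ i ∧ i ≤ n then ent g i ((i : ℤ) - (u : ℤ)) else 0

/-- The connected component of `g` in the graph of color-`i` covering edges. -/
def comp (i : ℕ) (g : Elt n m β0 β1) : Set (Elt n m β0 β1) :=
  {s | Relation.ReflTransGen (fun x y => edge i x y ∨ edge i y x) g s}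

/-- The integer `m_i(g) = (ρ(g) − min ρ on comp_i(g)) − (max ρ on comp_i(g) − ρ(g))`. -/
def mwt (i : ℕ) (g : Elt n m β0 β1) : ℤ :=
  ((rk g : ℤ) - ((sInf (rk '' comp i g) : ℕ) : ℤ)) -
    (((sSup (rk '' comp i g) : ℕ) : ℤ) - (rk g : ℤ))

end ST

/-- The `J₆`-component `C(t)`: elements of `L7(k)` agreeing with `t` at all positions of
color `5`. -/
def Ct9 (k : ℕ) (t : L7 k) : Type :=
  {c : L7 k // ∀ x : {x : N7 × ℕ // x ∈ pos7}, x.1.1 = n5 → c.1 x = t.1 x}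

/-- The row of the parallelogram attached to a color. -/
def row9 : N7 → ℕ
  | n1 => 1 | n2 => 2 | n3 => 3 | n4 => 4 | n5 => 0 | n5p => 5 | n6p => 6

/-- The color attached to a row of the parallelogram. -/
def col9 : ℕ → N7
  | 1 => n1 | 2 => n2 | 3 => n3 | 4 => n4 | 5 => n5p | 6 => n6p | _ => n5

/-- The place in the parallelogram attached to a position. -/
def idx9 (x : N7 × ℕ) : ℕ × ℤ := (row9 x.1, ((row9 x.1 : ℤ) + 1 - (x.2 : ℤ)) / 2)

/-- The position feeding the place `(i, j)`; `(n5, 99)` stands for the constant `0` and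
`(n5, 100)` for the constant `k`. -/
def src9 (i : ℕ) (j : ℤ) : N7 × ℕ :=
  if i = 0 then (if j = -8 then (n5, 99) else if j ≤ -4 then (n5, 12) else (n5, 4))
  else if i = 7 then (if j ≤ 1 then (n5, 8) else (n5, 100))
  else if 2 ≤ j then (n5, 100)
  else if (col9 i, ((i : ℤ) + 1 - 2 * j).toNat) ∈ pos7 then
    (col9 i, ((i : ℤ) + 1 - 2 * j).toNat)
  else if j ≤ -4 then (n5, 12)
  else if j - i ≤ -6 then (n5, 8)
  else (n5, 4)

/-- Evaluation of a labelling, extended to the two formal constants. -/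
def V9 (k : ℕ) (c : {x : N7 × ℕ // x ∈ pos7} → ℕ) (x : N7 × ℕ) : ℕ :=
  if h : x ∈ pos7 then c ⟨x, h⟩ else if x.2 = 100 then k else 0

/-- A decidable approximation of the order on positions. -/
def reach9 : ℕ → N7 × ℕ → N7 × ℕ → Bool
  | 0, x, y => decide (x = y)
  | n + 1, x, y => decide (x = y) ||
      decide (∃ z ∈ pos7, z.2 = x.2 + 1 ∧ adj7 x.1 z.1 ∧ reach9 n z y = true)

theorem reach9_sound (n : ℕ) : ∀ x y, x ∈ pos7 → reach9 n x y = true → CL.ple adj7 pos7 x y := by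
  induction n with
  | zero =>
    intro x y hx h
    simp only [reach9, decide_eq_true_eq] at h
    subst h
    exact Relation.ReflTransGen.refl
  | succ n ih =>
    intro x y hx h
    simp only [reach9, Bool.or_eq_true, decide_eq_true_eq] at h
    rcases h with h | ⟨z, hz, h1, h2, h3⟩
    · subst h
      exact Relation.ReflTransGen.refl
    · exact Relation.ReflTransGen.head ⟨hx, hz, h2, h1⟩ (ih z y hz h3)

/-- Decidable sufficient condition for `V9 y ≤ V9 x`. -/
def good9 (x y : N7 × ℕ) : Prop :=
  x = (n5, 100) ∨ y = (n5, 99) ∨ (x ∈ pos7 ∧ y ∈ pos7 ∧ reach9 16 x y = true)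

instance (x y : N7 × ℕ) : Decidable (good9 x y) := by unfold good9; infer_instance

theorem V9_le_k {k : ℕ} (c : L7 k) (x : N7 × ℕ) : V9 k c.1 x ≤ k := by
  unfold V9
  split_ifs
  · exact c.2.1 _
  · exact le_rfl
  · exact Nat.zero_le _

theorem V9_top (k : ℕ) (c) : V9 k c (n5, 100) = k := by
  have h : (n5, 100) ∉ pos7 := by decide
  simp [V9, h]

theorem V9_bot (k : ℕ) (c) : V9 k c (n5, 99) = 0 := by
  have h : (n5, 99) ∉ pos7 := by decide
  simp [V9, h]

theorem V9_pos (k : ℕ) (c) (x : {x : N7 × ℕ // x ∈ pos7}) : V9 k c x.1 = c x := by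
  simp [V9, x.2]

theorem V9_mono {k : ℕ} (c : L7 k) (x y : N7 × ℕ) (h : good9 x y) :
    V9 k c.1 y ≤ V9 k c.1 x := by
  rcases h with h | h | ⟨hx, hy, h⟩
  · rw [h, V9_top]; exact V9_le_k c y
  · rw [h, V9_bot]; exact Nat.zero_le _
  · rw [V9_pos k c.1 ⟨x, hx⟩, V9_pos k c.1 ⟨y, hy⟩]
    exact c.2.2.1 _ _ (reach9_sound 16 x y hx h)

theorem V9_five {k : ℕ} {t : L7 k} (c : Ct9 k t) (x : N7 × ℕ) (h : x.1 = n5) :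
    V9 k c.1.1 x = V9 k t.1 x := by
  unfold V9
  split_ifs with hx
  · exact c.2 ⟨x, hx⟩ h
  · rfl
  · rfl

theorem tab_mono1 : ∀ i ∈ Finset.range 7, ∀ u ∈ Finset.range 8,
    good9 (src9 i ((i : ℤ) - 7 + (u : ℤ))) (src9 (i + 1) ((i : ℤ) - 7 + (u : ℤ))) := by
  decide +kernel

theorem tab_mono2 : ∀ i ∈ Finset.range 7, ∀ u ∈ Finset.range 9,
    good9 (src9 (i + 1) ((i : ℤ) - 8 + (u : ℤ) + 1)) (src9 i ((i : ℤ) - 8 + (u : ℤ))) := by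
  decide +kernel

theorem tab_src : ∀ i ∈ Finset.range 8, ∀ u ∈ Finset.range 9,
    (src9 i ((i : ℤ) - 8 + (u : ℤ))).1 ≠ n5 →
    src9 i ((i : ℤ) - 8 + (u : ℤ)) ∈ pos7 ∧
    idx9 (src9 i ((i : ℤ) - 8 + (u : ℤ))) = (i, (i : ℤ) - 8 + (u : ℤ)) := by
  decide +kernel

theorem tab_idx : ∀ x ∈ pos7, x.1 ≠ n5 →
    1 ≤ (idx9 x).1 ∧ (idx9 x).1 ≤ 6 ∧ ((idx9 x).1 : ℤ) - 8 ≤ (idx9 x).2 ∧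
    (idx9 x).2 ≤ ((idx9 x).1 : ℤ) ∧ src9 (idx9 x).1 (idx9 x).2 = x := by
  decide +kernel

theorem row9_inj : ∀ a b : N7, row9 a = row9 b → a = b := by decide

theorem src9_idx (p : ST.Idx 6 9) (h : (src9 p.1.1 p.1.2).1 ≠ n5) :
    src9 p.1.1 p.1.2 ∈ pos7 ∧ idx9 (src9 p.1.1 p.1.2) = p.1 := by
  obtain ⟨⟨i, j⟩, h1, h2, h3⟩ := p
  simp only at h1 h2 h3 h ⊢
  push_cast at h2
  have e : (i : ℤ) - 8 + ((j - i + 8).toNat : ℤ) = j := by omega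
  have := tab_src i (by simp; omega) (j - i + 8).toNat (by simp; omega)
  rw [e] at this
  exact this h

/-- The place of a position, as an index. -/
def toIdx9 (x : {x : N7 × ℕ // x ∈ pos7}) (h : x.1.1 ≠ n5) : ST.Idx 6 9 :=
  ⟨idx9 x.1, by
    have := tab_idx x.1 x.2 h
    push_cast
    omega⟩

theorem src9_toIdx (x : {x : N7 × ℕ // x ∈ pos7}) (h : x.1.1 ≠ n5) :
    src9 (toIdx9 x h).1.1 (toIdx9 x h).1.2 = x.1 := (tab_idx x.1 x.2 h).2.2.2.2

/-- The boundary functions. -/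
abbrev b0 {k : ℕ} (t : L7 k) : ℤ → ℕ :=
  fun j => if j = -8 then 0 else if j ≤ -4 then t.1 ⟨(n5, 12), by decide⟩
          else t.1 ⟨(n5, 4), by decide⟩

abbrev b1 {k : ℕ} (t : L7 k) : ℤ → ℕ :=
  fun j => if j ≤ 1 then t.1 ⟨(n5, 8), by decide⟩ else k

theorem V9_12 {k : ℕ} (t : L7 k) : V9 k t.1 (n5, 12) = t.1 ⟨(n5, 12), by decide⟩ :=
  V9_pos k t.1 ⟨(n5, 12), by decide⟩
theorem V9_8 {k : ℕ} (t : L7 k) : V9 k t.1 (n5, 8) = t.1 ⟨(n5, 8), by decide⟩ :=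
  V9_pos k t.1 ⟨(n5, 8), by decide⟩
theorem V9_4 {k : ℕ} (t : L7 k) : V9 k t.1 (n5, 4) = t.1 ⟨(n5, 4), by decide⟩ :=
  V9_pos k t.1 ⟨(n5, 4), by decide⟩

theorem src9_zero (j : ℤ) :
    src9 0 j = if j = -8 then (n5, 99) else if j ≤ -4 then (n5, 12) else (n5, 4) := by
  simp [src9]

theorem src9_seven (j : ℤ) : src9 7 j = if j ≤ 1 then (n5, 8) else (n5, 100) := by
  simp [src9]

/-- The isomorphism. -/
def f9 {k : ℕ} {t : L7 k} (c : Ct9 k t) : ST.Elt 6 9 (b0 t) (b1 t) :=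
  ⟨fun p => V9 k c.1.1 (src9 p.1.1 p.1.2), by
    refine ⟨?_, ?_, ?_, ?_⟩
    · intro p hp
      change V9 k c.1.1 (src9 p.1.1 p.1.2) = b0 t p.1.2
      rw [hp, src9_zero]
      unfold b0
      split_ifs
      · exact V9_bot _ _
      · rw [V9_five c _ rfl, V9_12]
      · rw [V9_five c _ rfl, V9_4]
    · intro p hp
      change V9 k c.1.1 (src9 p.1.1 p.1.2) = b1 t p.1.2
      rw [hp, src9_seven]
      unfold b1
      split_ifs
      · rw [V9_five c _ rfl, V9_8]
      · exact V9_top _ _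
    · rintro ⟨⟨i, j⟩, h1, h2, h3⟩ ⟨⟨i', j'⟩, h1', h2', h3'⟩ e1 e2
      simp only at *
      subst e1 e2
      push_cast at h2 h2'
      have e : (i : ℤ) - 7 + ((j' - i + 7).toNat : ℤ) = j' := by omega
      have := tab_mono1 i (by simp; omega) (j' - i + 7).toNat (by simp; omega)
      rw [e] at this
      exact V9_mono c.1 _ _ this
    · rintro ⟨⟨i, j⟩, h1, h2, h3⟩ ⟨⟨i', j'⟩, h1', h2', h3'⟩ e1 e2
      simp only at *
      subst e1 e2
      push_cast at h2 h2'
      have e : (i : ℤ) - 8 + ((j - i + 8).toNat : ℤ) = j := by omega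
      have := tab_mono2 i (by simp; omega) (j - i + 8).toNat (by simp; omega)
      rw [e] at this
      exact V9_mono c.1 _ _ this⟩

theorem f9_val {k : ℕ} {t : L7 k} (c : Ct9 k t) (p : ST.Idx 6 9) :
    (f9 c).1 p = V9 k c.1.1 (src9 p.1.1 p.1.2) := rfl

theorem f9_toIdx {k : ℕ} {t : L7 k} (c : Ct9 k t) (x : {x : N7 × ℕ // x ∈ pos7})
    (h : x.1.1 ≠ n5) : (f9 c).1 (toIdx9 x h) = c.1.1 x := by
  rw [f9_val, src9_toIdx, V9_pos]

theorem f9_le {k : ℕ} {t : L7 k} (c d : Ct9 k t) :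
    CL.elLe c.1 d.1 ↔ ST.le (f9 c) (f9 d) := by
  constructor
  · intro h p
    rw [f9_val, f9_val]
    unfold V9
    split_ifs
    · exact h _
    · exact le_rfl
    · exact le_rfl
  · intro h x
    by_cases hx : x.1.1 = n5
    · rw [c.2 x hx, d.2 x hx]
    · rw [← f9_toIdx c x hx, ← f9_toIdx d x hx]
      exact h _

theorem f9_inj {k : ℕ} {t : L7 k} : Function.Injective (f9 (k := k) (t := t)) := by
  intro c d h
  apply Subtype.ext
  apply Subtype.ext
  funext x
  by_cases hx : x.1.1 = n5
  · rw [c.2 x hx, d.2 x hx]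
  · rw [← f9_toIdx c x hx, ← f9_toIdx d x hx, h]

theorem f9_edge {k : ℕ} {t : L7 k} (c d : Ct9 k t) (a : N7) (ha : a ≠ n5) :
    CL.edge a c.1 d.1 ↔ ST.edge (row9 a) (f9 c) (f9 d) := by
  constructor
  · rintro ⟨x, rfl, h1, h2⟩
    refine ⟨toIdx9 x ha, rfl, ?_, ?_⟩
    · rw [f9_toIdx, f9_toIdx, h1]
    · intro q hq
      rw [f9_val, f9_val]
      by_cases h5 : (src9 q.1.1 q.1.2).1 = n5
      · rw [V9_five c _ h5, V9_five d _ h5]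
      · obtain ⟨hm, hi⟩ := src9_idx q h5
        rw [V9_pos k c.1.1 ⟨_, hm⟩, V9_pos k d.1.1 ⟨_, hm⟩]
        apply h2
        rintro rfl
        exact hq (Subtype.ext hi.symm)
  · rintro ⟨p, hp, h1, h2⟩
    rw [f9_val, f9_val] at h1
    by_cases h5 : (src9 p.1.1 p.1.2).1 = n5
    · rw [V9_five c _ h5, V9_five d _ h5] at h1
      omega
    · obtain ⟨hm, hi⟩ := src9_idx p h5
      rw [V9_pos k c.1.1 ⟨_, hm⟩, V9_pos k d.1.1 ⟨_, hm⟩] at h1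
      refine ⟨⟨_, hm⟩, ?_, h1, ?_⟩
      · apply row9_inj
        rw [← hp]
        exact congrArg Prod.fst hi
      · intro y hy
        by_cases hx : y.1.1 = n5
        · rw [c.2 y hx, d.2 y hx]
        · rw [← f9_toIdx c y hx, ← f9_toIdx d y hx]
          apply h2
          rintro rfl
          exact hy (Subtype.ext (src9_toIdx y hx).symm)

section surj

variable {k : ℕ} {t : L7 k} (g : ST.Elt 6 9 (b0 t) (b1 t))

theorem ent_val (p : ST.Idx 6 9) : ST.ent g p.1.1 p.1.2 = g.1 p := by
  unfold ST.ent
  rw [dif_pos p.2]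
  rfl

theorem ent_zero (j : ℤ) (h : -8 ≤ j) (h' : j ≤ 0) : ST.ent g 0 j = b0 t j := by
  exact (ent_val g ⟨(0, j), by simp; omega⟩).trans (g.2.1 ⟨(0, j), by simp; omega⟩ rfl)

theorem ent_seven (j : ℤ) (h : -1 ≤ j) (h' : j ≤ 7) : ST.ent g 7 j = b1 t j := by
  exact (ent_val g ⟨(7, j), by simp; omega⟩).trans (g.2.2.1 ⟨(7, j), by simp; omega⟩ rfl)

theorem ent_col (i : ℕ) (j : ℤ) (hi : i ≤ 6) (h : (i : ℤ) - 7 ≤ j) (h' : j ≤ i) :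
    ST.ent g (i + 1) j ≤ ST.ent g i j := by
  have hp : i ≤ 6 + 1 ∧ (i : ℤ) - (((9 : ℕ) : ℤ) - 1) ≤ j ∧ j ≤ i := by omega
  have hq : i + 1 ≤ 6 + 1 ∧ ((i + 1 : ℕ) : ℤ) - (((9 : ℕ) : ℤ) - 1) ≤ j ∧ j ≤ ((i + 1 : ℕ) : ℤ) := by
    omega
  exact ((ent_val g ⟨(i + 1, j), hq⟩).trans_le
    (g.2.2.2.1 ⟨(i, j), hp⟩ ⟨(i + 1, j), hq⟩ rfl rfl)).trans_eq (ent_val g ⟨(i, j), hp⟩).symm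

theorem ent_diag (i : ℕ) (j : ℤ) (hi : i ≤ 6) (h : (i : ℤ) - 8 ≤ j) (h' : j ≤ i) :
    ST.ent g i j ≤ ST.ent g (i + 1) (j + 1) := by
  have hp : i ≤ 6 + 1 ∧ (i : ℤ) - (((9 : ℕ) : ℤ) - 1) ≤ j ∧ j ≤ i := by omega
  have hq : i + 1 ≤ 6 + 1 ∧ ((i + 1 : ℕ) : ℤ) - (((9 : ℕ) : ℤ) - 1) ≤ j + 1 ∧
      j + 1 ≤ ((i + 1 : ℕ) : ℤ) := by omega
  exact ((ent_val g ⟨(i, j), hp⟩).trans_le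
    (g.2.2.2.2 ⟨(i, j), hp⟩ ⟨(i + 1, j + 1), hq⟩ rfl rfl)).trans_eq
      (ent_val g ⟨(i + 1, j + 1), hq⟩).symm

theorem ent_ub0 (i : ℕ) (j : ℤ) (hi : i ≤ 7) (h : (i : ℤ) - 8 ≤ j) (h' : j ≤ 0) :
    ST.ent g i j ≤ b0 t j := by
  induction i with
  | zero => exact (ent_zero g j (by simpa using h) h').le
  | succ i ih =>
    push_cast at h
    exact (ent_col g i j (by omega) (by omega) (by omega)).trans (ih (by omega) (by omega))

theorem ent_lb0 (i : ℕ) : ∀ (j : ℤ) (_ : i ≤ 7) (_ : (i : ℤ) - 8 ≤ j) (_ : j ≤ i),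
    b0 t (j - i) ≤ ST.ent g i j := by
  induction i with
  | zero =>
    intro j _ h h'
    rw [ent_zero g j (by simpa using h) (by simpa using h')]
    simp
  | succ i ih =>
    intro j hi h h'
    push_cast at h h' ⊢
    have h1 := ih (j - 1) (by omega) (by omega) (by omega)
    have h2 := ent_diag g i (j - 1) (by omega) (by omega) (by omega)
    rw [show j - 1 + 1 = j by ring] at h2
    rw [show j - ((i : ℤ) + 1) = j - 1 - i by ring]
    exact h1.trans h2

theorem ent_ub1 (n : ℕ) : ∀ (i : ℕ) (j : ℤ) (_ : i + n = 7) (_ : (i : ℤ) - 8 ≤ j) (_ : j ≤ i),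
    ST.ent g i j ≤ b1 t (j + n) := by
  induction n with
  | zero =>
    intro i j e h h'
    obtain rfl : i = 7 := by omega
    rw [ent_seven g j (by push_cast at h; omega) (by simpa using h')]
    simp
  | succ n ih =>
    intro i j e h h'
    have h1 := ih (i + 1) (j + 1) (by omega) (by push_cast; omega) (by push_cast; omega)
    have h2 := ent_diag g i j (by omega) (by omega) (by omega)
    push_cast
    rw [show j + ((n : ℤ) + 1) = j + 1 + n by ring]
    exact h2.trans h1

theorem ent_lb1 (n : ℕ) : ∀ (i : ℕ) (j : ℤ) (_ : i + n = 7) (_ : -1 ≤ j) (_ : j ≤ i),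
    b1 t j ≤ ST.ent g i j := by
  induction n with
  | zero =>
    intro i j e h h'
    obtain rfl : i = 7 := by omega
    rw [ent_seven g j h (by simpa using h')]
  | succ n ih =>
    intro i j e h h'
    have h1 := ih (i + 1) j (by omega) (by omega) (by push_cast; omega)
    have h2 := ent_col g i j (by omega) (by omega) (by omega)
    exact h1.trans h2

theorem t_chain (t : L7 k) : t.1 ⟨(n5, 12), by decide⟩ ≤ t.1 ⟨(n5, 8), by decide⟩ ∧
    t.1 ⟨(n5, 8), by decide⟩ ≤ t.1 ⟨(n5, 4), by decide⟩ ∧ t.1 ⟨(n5, 4), by decide⟩ ≤ k := by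
  refine ⟨?_, ?_, t.2.1 _⟩
  · exact t.2.2.1 _ _ (reach9_sound 16 _ _ (by decide) (by decide +kernel))
  · exact t.2.2.1 _ _ (reach9_sound 16 _ _ (by decide) (by decide +kernel))

theorem tab_cases : ∀ i ∈ Finset.range 8, ∀ u ∈ Finset.range 9,
    (src9 i ((i : ℤ) - 8 + (u : ℤ))).1 = n5 →
    ((src9 i ((i : ℤ) - 8 + (u : ℤ)) = (n5, 100) ∧ 2 ≤ (i : ℤ) - 8 + (u : ℤ)) ∨
     (src9 i ((i : ℤ) - 8 + (u : ℤ)) = (n5, 12) ∧ (i : ℤ) - 8 + (u : ℤ) ≤ -4 ∧ 1 ≤ u) ∨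
     (src9 i ((i : ℤ) - 8 + (u : ℤ)) = (n5, 8) ∧ -1 ≤ (i : ℤ) - 8 + (u : ℤ) ∧
        (i : ℤ) - 8 + (u : ℤ) ≤ 1 ∧ u ≤ 2) ∨
     (src9 i ((i : ℤ) - 8 + (u : ℤ)) = (n5, 4) ∧ -3 ≤ (i : ℤ) - 8 + (u : ℤ) ∧
        (i : ℤ) - 8 + (u : ℤ) ≤ 0 ∧ 5 ≤ u) ∨
     (src9 i ((i : ℤ) - 8 + (u : ℤ)) = (n5, 99) ∧ i = 0 ∧ u = 0)) := by
  decide +kernel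

theorem ent_forced (i : ℕ) (j : ℤ) (hi : i ≤ 7) (h : (i : ℤ) - 8 ≤ j) (h' : j ≤ i)
    (h5 : (src9 i j).1 = n5) : ST.ent g i j = V9 k t.1 (src9 i j) := by
  have e : (i : ℤ) - 8 + ((j - i + 8).toNat : ℤ) = j := by omega
  have hc := tab_cases i (by simp; omega) (j - i + 8).toNat (by simp; omega)
  rw [e] at hc
  have l0 := ent_lb0 g i j hi h h'
  have u0 := ent_ub0 g i j hi h
  have l1 := ent_lb1 g (7 - i) i j (by omega)
  have u1 := ent_ub1 g (7 - i) i j (by omega) h h'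
  rw [show ((7 - i : ℕ) : ℤ) = 7 - i by omega] at u1
  have ht := t_chain t
  simp only [b0, b1] at l0 u0 l1 u1
  rcases hc h5 with ⟨q, hq⟩ | ⟨q, hq⟩ | ⟨q, hq⟩ | ⟨q, hq⟩ | ⟨q, hq⟩ <;> rw [q]
  · rw [V9_top]
    specialize l1 (by omega) h'
    rw [if_neg (by omega)] at l1
    split_ifs at u1 <;> omega
  · rw [V9_12]
    specialize u0 (by omega)
    rw [if_neg (by omega), if_pos (by omega)] at l0 u0
    omega
  · rw [V9_8]
    specialize l1 (by omega) h'
    rw [if_pos (by omega)] at l1 u1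
    omega
  · rw [V9_4]
    specialize u0 (by omega)
    rw [if_neg (by omega), if_neg (by omega)] at l0 u0
    omega
  · rw [V9_bot]
    specialize u0 (by omega)
    rw [if_pos (by omega)] at u0
    omega

theorem ent_le_k (i : ℕ) (j : ℤ) (hi : i ≤ 7) (h : (i : ℤ) - 8 ≤ j) (h' : j ≤ i) :
    ST.ent g i j ≤ k := by
  have u1 := ent_ub1 g (7 - i) i j (by omega) h h'
  have ht := t_chain t
  simp only [b1] at u1
  split_ifs at u1 <;> omega

/-- The candidate preimage of an array. -/
def inv9 (x : {x : N7 × ℕ // x ∈ pos7}) : ℕ :=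
  if x.1.1 = n5 then t.1 x else ST.ent g (idx9 x.1).1 (idx9 x.1).2

theorem tab_step : ∀ x ∈ pos7, ∀ y ∈ pos7, adj7 x.1 y.1 → y.2 = x.2 + 1 →
    x.1 ≠ n5 → y.1 ≠ n5 →
    (idx9 y = ((idx9 x).1 + 1, (idx9 x).2)) ∨ (idx9 x = ((idx9 y).1 + 1, (idx9 y).2 + 1)) := by
  decide +kernel

theorem tab_step_to : ∀ x ∈ pos7, ∀ y ∈ pos7, adj7 x.1 y.1 → y.2 = x.2 + 1 →
    y.1 = n5 → x.1 ≠ n5 ∧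
    (x, y) ∈ [((n4, 3), (n5, 4)), ((n4, 7), (n5, 8)), ((n4, 11), (n5, 12))] := by
  decide +kernel

theorem tab_step_from : ∀ x ∈ pos7, ∀ y ∈ pos7, adj7 x.1 y.1 → y.2 = x.2 + 1 →
    x.1 = n5 → y.1 ≠ n5 ∧
    (x, y) ∈ [((n5, 4), (n4, 5)), ((n5, 8), (n4, 9)), ((n5, 12), (n4, 13))] := by
  decide +kernel

theorem inv9_step (x y : {x : N7 × ℕ // x ∈ pos7}) (h : CL.step adj7 pos7 x.1 y.1) :
    inv9 g y ≤ inv9 g x := by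
  obtain ⟨⟨xa, xr⟩, hx⟩ := x
  obtain ⟨⟨ya, yr⟩, hy⟩ := y
  obtain ⟨-, -, ha, hr⟩ := h
  have ht := t_chain t
  unfold inv9
  by_cases hy5 : ya = n5
  · obtain ⟨hx5, hm⟩ := tab_step_to _ hx _ hy ha hr hy5
    rw [if_pos hy5, if_neg hx5]
    simp only [List.mem_cons, List.not_mem_nil, or_false, Prod.mk.injEq] at hm
    rcases hm with ⟨⟨rfl, rfl⟩, rfl, rfl⟩ | ⟨⟨rfl, rfl⟩, rfl, rfl⟩ | ⟨⟨rfl, rfl⟩, rfl, rfl⟩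
    · simpa [idx9, row9, b0, b1] using ent_lb0 g 4 1 (by norm_num) (by norm_num) (by norm_num)
    · simpa [idx9, row9, b0, b1] using ent_lb1 g 3 4 (-1) (by norm_num) (by norm_num) (by norm_num)
    · simpa [idx9, row9, b0, b1] using ent_lb0 g 4 (-3) (by norm_num) (by norm_num) (by norm_num)
  · rw [if_neg hy5]
    by_cases hx5 : xa = n5
    · obtain ⟨-, hm⟩ := tab_step_from _ hx _ hy ha hr hx5
      rw [if_pos hx5]
      simp only [List.mem_cons, List.not_mem_nil, or_false, Prod.mk.injEq] at hm
      rcases hm with ⟨⟨rfl, rfl⟩, rfl, rfl⟩ | ⟨⟨rfl, rfl⟩, rfl, rfl⟩ | ⟨⟨rfl, rfl⟩, rfl, rfl⟩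
      · simpa [idx9, row9, b0, b1] using ent_ub0 g 4 0 (by norm_num) (by norm_num) (by norm_num)
      · simpa [idx9, row9, b0, b1] using ent_ub1 g 3 4 (-2) (by norm_num) (by norm_num) (by norm_num)
      · simpa [idx9, row9, b0, b1] using ent_ub0 g 4 (-4) (by norm_num) (by norm_num) (by norm_num)
    · rw [if_neg hx5]
      have bx := tab_idx _ hx hx5
      have hby := tab_idx _ hy hy5
      rcases tab_step _ hx _ hy ha hr hx5 hy5 with e | e
      · rw [e] at hby ⊢
        simp only at hby ⊢
        exact ent_col g _ _ (by omega) (by omega) (by omega)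
      · rw [e] at bx ⊢
        simp only at bx ⊢
        exact ent_diag g _ _ (by omega) (by omega) (by omega)

theorem inv9_anti (x y : {x : N7 × ℕ // x ∈ pos7}) (h : CL.ple adj7 pos7 y.1 x.1) :
    inv9 g x ≤ inv9 g y := by
  obtain ⟨x, hx⟩ := x
  unfold CL.ple at h
  simp only at h
  induction h with
  | refl => exact le_rfl
  | tail _ hs ih => exact (inv9_step g ⟨_, hs.1⟩ ⟨_, hx⟩ hs).trans (ih hs.1)

theorem f9_surj : Function.Surjective (f9 (k := k) (t := t)) := by
  intro g
  refine ⟨⟨⟨inv9 g, ?_, inv9_anti g, trivial⟩, ?_⟩, ?_⟩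
  · intro x
    unfold inv9
    split_ifs with h
    · exact t.2.1 x
    · have b := tab_idx _ x.2 h
      exact ent_le_k g _ _ (by omega) (by omega) (by omega)
  · intro x hx
    exact if_pos hx
  · apply Subtype.ext
    funext p
    refine (f9_val _ p).trans ?_
    by_cases h5 : (src9 p.1.1 p.1.2).1 = n5
    · refine (V9_five _ _ h5).trans ?_
      rw [← ent_val g p]
      have hp := p.2
      push_cast at hp
      exact (ent_forced g _ _ (by omega) (by omega) (by omega) h5).symm
    · obtain ⟨hm, hi⟩ := src9_idx p h5
      rw [V9_pos k _ ⟨_, hm⟩]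
      change inv9 g _ = _
      unfold inv9
      rw [if_neg h5, hi, ent_val]

end surj

/-- Lemma 4.2: the `J₆`-component of `t` in `L7(k)` is isomorphic, as a
poset with colored covering relations, to a skew-tabular lattice with `n = 6`, `m = 9`,
where the `E₇` colors `1,2,3,4,5',6'` correspond to the colors `1,…,6`. -/
theorem statement_9 (k : ℕ) (t : L7 k) :
    ∃ f : Ct9 k t → ST.Elt 6 9
        (fun j => if j = -8 then 0 else if j ≤ -4 then t.1 ⟨(n5, 12), by decide⟩
          else t.1 ⟨(n5, 4), by decide⟩)
        (fun j => if j ≤ 1 then t.1 ⟨(n5, 8), by decide⟩ else k),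
      Function.Bijective f ∧
      (∀ c d : Ct9 k t, CL.elLe c.1 d.1 ↔ ST.le (f c) (f d)) ∧
      ∀ c d : Ct9 k t,
        (CL.edge n1 c.1 d.1 ↔ ST.edge 1 (f c) (f d)) ∧
        (CL.edge n2 c.1 d.1 ↔ ST.edge 2 (f c) (f d)) ∧
        (CL.edge n3 c.1 d.1 ↔ ST.edge 3 (f c) (f d)) ∧
        (CL.edge n4 c.1 d.1 ↔ ST.edge 4 (f c) (f d)) ∧
        (CL.edge n5p c.1 d.1 ↔ ST.edge 5 (f c) (f d)) ∧
        (CL.edge n6p c.1 d.1 ↔ ST.edge 6 (f c) (f d)) := by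
  exact ⟨f9, ⟨f9_inj, f9_surj⟩, f9_le, fun c d =>
    ⟨f9_edge c d n1 (by decide), f9_edge c d n2 (by decide), f9_edge c d n3 (by decide),
      f9_edge c d n4 (by decide), f9_edge c d n5p (by decide), f9_edge c d n6p (by decide)⟩⟩
end
end
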